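/- For every integer n ≥ 0, the number of perfect matchings of G_n equals A_{n+1}, where A_m = Π_{i=0}^{m−1} (3i+1)!/(m+i)! is the number of n×n alternating sign matrices (and of totally symmetric self-complementary plane partitions of order m). -/

import Mathlib

open Finset

/-- Membership predicate for the vertex set `V_n` of the TSSCPP graph `G_n`:
`0 ≤ x₁ ≤ 2n`, `x₁ ≤ x₂ ≤ 2n+1`, with `(2n,2n+1)` removed when `n` is odd. -/
def memV (n : ℕ) (x : ℤ × ℤ) : Prop :=
  0 ≤ x.1 ∧ x.1 ≤ 2*(n:ℤ) ∧ x.1 ≤ x.2 ∧ x.2 ≤ 2*(n:ℤ)+1 ∧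
    ¬(n % 2 = 1 ∧ x.1 = 2*(n:ℤ) ∧ x.2 = 2*(n:ℤ)+1)

instance memV.decPred (n : ℕ) : DecidablePred (memV n) := fun x => by
  unfold memV; infer_instance

/-- The vertex set `V_n` as a finite set. -/
noncomputable def Vfin (n : ℕ) : Finset (ℤ × ℤ) :=
  (Finset.Icc (0:ℤ) (2*(n:ℤ)) ×ˢ Finset.Icc (0:ℤ) (2*(n:ℤ)+1)).filter (memV n)

/-- The vertex set `V_n` as a set. -/
def Vset (n : ℕ) : Set (ℤ × ℤ) := {x | memV n x}

/-- The distinguished vertex `b_n = (2n, 2n+1-(n mod 2))`. -/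
def bvertex (n : ℕ) : ℤ × ℤ := (2*(n:ℤ), 2*(n:ℤ)+1 - ((n % 2 : ℕ) : ℤ))

/-- Edge relation (with `x` the "lower-left" endpoint) of the TSSCPP graph `G_n`:
horizontal edges `((x₁,x₂),(x₁+1,x₂))` for `0 ≤ x₁ ≤ 2n−1`, `x₁ ≤ x₂ ≤ 2n+1`, `x₁+x₂` odd;
vertical edges `((x₁,x₂),(x₁,x₂+1))` for `0 ≤ x₁ ≤ 2n` (`2n−1` when `n` odd), `x₁ ≤ x₂ ≤ 2n`;
diagonal edges `((x₁,x₁),(x₁+1,x₁+1))` for `0 ≤ x₁ ≤ 2n−1`. -/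
def edgeRel (n : ℕ) (x y : ℤ × ℤ) : Prop :=
  (y.1 = x.1 + 1 ∧ y.2 = x.2 ∧ 0 ≤ x.1 ∧ x.1 ≤ 2*(n:ℤ) - 1 ∧ x.1 ≤ x.2 ∧
      x.2 ≤ 2*(n:ℤ)+1 ∧ Odd (x.1 + x.2)) ∨
  (y.1 = x.1 ∧ y.2 = x.2 + 1 ∧ 0 ≤ x.1 ∧ x.1 ≤ 2*(n:ℤ) - ((n % 2 : ℕ) : ℤ) ∧
      x.1 ≤ x.2 ∧ x.2 ≤ 2*(n:ℤ)) ∨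
  (x.1 = x.2 ∧ y.1 = x.1 + 1 ∧ y.2 = x.2 + 1 ∧ 0 ≤ x.1 ∧ x.1 ≤ 2*(n:ℤ) - 1)

/-- The TSSCPP graph `G_n` (as a graph on all of `ℤ × ℤ`; all of its edges join
vertices of `V_n`). -/
def Gph (n : ℕ) : SimpleGraph (ℤ × ℤ) where
  Adj x y := edgeRel n x y ∨ edgeRel n y x
  symm := ⟨fun x y h => Or.symm h⟩
  loopless := by
    constructor
    rintro ⟨x1, x2⟩ (h | h) <;>
      rcases h with ⟨h1, h2, -⟩ | ⟨h1, h2, -⟩ | ⟨h0, h1, h2, -⟩ <;> omega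

/-- `Zpm n U` = number of perfect matchings of the subgraph of `G_n` induced on `V_n \ U`. -/
noncomputable def Zpm (n : ℕ) (U : Set (ℤ × ℤ)) : ℕ :=
  Nat.card {M : ((Gph n).induce (Vset n \ U)).Subgraph // M.IsPerfectMatching}

section Condensation
open Matrix
variable {R : Type*} [CommRing R]

theorem det_updateCol_first_last {n : ℕ} (A : Matrix (Fin (n + 2)) (Fin (n + 2)) R) :
    ((A.updateCol 0 (Pi.single 0 1)).updateCol (Fin.last _) (Pi.single (Fin.last _) 1)).det =
      (A.submatrix (fun i : Fin n => i.castSucc.succ) (fun i : Fin n => i.castSucc.succ)).det := by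
  rw [Matrix.det_succ_column_zero, Finset.sum_eq_single 0]
  · have h0 : (0 : Fin (n + 2)) ≠ Fin.last _ := by simp [Fin.ext_iff]
    rw [Matrix.det_succ_column _ (Fin.last n), Finset.sum_eq_single (Fin.last n)]
    · have : ∀ i : Fin n, (Fin.castSucc i).succ ≠ Fin.last _ := by
        intro i; simp [Fin.ext_iff]; omega
      have h2 : ∀ i : Fin n, (Fin.castSucc i).succ ≠ 0 := fun i => Fin.succ_ne_zero _
      simp only [Matrix.submatrix_apply, Matrix.updateCol_apply, ← Fin.succ_last]
      simp
      congr 1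
      ext i j
      simp [this j, h2]
    · intro i _ hi
      simp [← Fin.succ_last, hi]
    · simp
  · intro i _ hi
    have h0 : (0 : Fin (n + 2)) ≠ Fin.last _ := by simp [Fin.ext_iff]
    simp [hi, h0]
  · simp

theorem det_one_updateCol_first_last {n : ℕ} (b c : Fin (n + 2) → R) :
    (((1 : Matrix (Fin (n + 2)) (Fin (n + 2)) R).updateCol 0 b).updateCol (Fin.last _) c).det =
      b 0 * c (Fin.last _) - c 0 * b (Fin.last _) := by
  have h0 : (0 : Fin (n + 2)) ≠ Fin.last _ := by simp [Fin.ext_iff]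
  let U : Matrix (Fin (n + 2)) (Fin 2) R :=
    Matrix.of fun i k => ![b i - (Pi.single 0 1 : Fin (n + 2) → R) i,
      c i - (Pi.single (Fin.last _) 1 : Fin (n + 2) → R) i] k
  let V : Matrix (Fin 2) (Fin (n + 2)) R :=
    Matrix.of fun k j => ![(Pi.single 0 1 : Fin (n + 2) → R) j,
      (Pi.single (Fin.last _) 1 : Fin (n + 2) → R) j] k
  have hP : ((1 : Matrix (Fin (n + 2)) (Fin (n + 2)) R).updateCol 0 b).updateCol (Fin.last _) c =
      1 + U * V := by
    ext i j
    simp only [Matrix.updateCol_apply, Matrix.add_apply, Matrix.mul_apply, Fin.sum_univ_two, U, V,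
      Matrix.of_apply, Matrix.cons_val_zero, Matrix.cons_val_one, Matrix.one_apply, Pi.single_apply]
    by_cases hj : j = Fin.last _
    · subst hj; simp [h0.symm]
    · by_cases hj0 : j = 0
      · subst hj0; simp [h0]
      · simp [hj, hj0]
  rw [hP, Matrix.det_one_add_mul_comm, Matrix.det_fin_two]
  simp [U, V, Matrix.add_apply, Matrix.mul_apply, Pi.single_apply, h0, h0.symm]

theorem desnanot_jacobi_of_det_ne_zero [IsDomain R] {n : ℕ}
    (A : Matrix (Fin (n + 2)) (Fin (n + 2)) R) (hA : A.det ≠ 0) :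
    A.det * (A.submatrix (fun i : Fin n => i.castSucc.succ) (fun i : Fin n => i.castSucc.succ)).det =
      (A.submatrix Fin.castSucc Fin.castSucc).det * (A.submatrix Fin.succ Fin.succ).det -
      (A.submatrix Fin.castSucc Fin.succ).det * (A.submatrix Fin.succ Fin.castSucc).det := by
  set b : Fin (n + 2) → R := fun i => A.adjugate i 0
  set c : Fin (n + 2) → R := fun i => A.adjugate i (Fin.last _)
  have hmul : A * (((1 : Matrix (Fin (n + 2)) (Fin (n + 2)) R).updateCol 0 b).updateCol
      (Fin.last _) c) = (A.updateCol 0 (A.det • Pi.single 0 1)).updateCol (Fin.last _)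
        (A.det • Pi.single (Fin.last _) 1) := by
    have hadj := Matrix.mul_adjugate A
    ext i j
    by_cases hj : j = Fin.last _
    · subst hj
      have := congrFun (congrFun hadj i) (Fin.last _)
      rw [Matrix.mul_apply] at this
      simp only [Matrix.mul_apply, Matrix.updateCol_self, c, this]
      simp [Matrix.one_apply, Pi.single_apply]
    · by_cases hj0 : j = 0
      · subst hj0
        have := congrFun (congrFun hadj i) 0
        rw [Matrix.mul_apply] at this
        simp only [Matrix.mul_apply, Matrix.updateCol_ne hj, Matrix.updateCol_self, b, this]
        simp [Matrix.one_apply, Pi.single_apply]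
      · simp [Matrix.mul_apply, Matrix.updateCol_ne hj, Matrix.updateCol_ne hj0, Matrix.one_apply]
  have hdet := congrArg Matrix.det hmul
  have h0 : (0 : Fin (n + 2)) ≠ Fin.last _ := by simp [Fin.ext_iff]
  rw [Matrix.det_mul, det_one_updateCol_first_last, Matrix.det_updateCol_smul,
    Matrix.updateCol_comm _ h0, Matrix.det_updateCol_smul, Matrix.updateCol_comm _ h0.symm,
    det_updateCol_first_last] at hdet
  have hcancel := mul_left_cancel₀ hA hdet
  rw [← hcancel]
  simp only [b, c, Matrix.adjugate_fin_succ_eq_det_submatrix, Fin.succAbove_zero,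
    Fin.succAbove_last]
  have hs : ((-1 : R) ^ n) * (-1) ^ n = 1 := by rw [← mul_pow]; simp
  simp only [Fin.val_zero, Fin.val_last, pow_add]
  linear_combination ((A.submatrix Fin.castSucc Fin.castSucc).det *
    (A.submatrix Fin.succ Fin.succ).det - (A.submatrix Fin.castSucc Fin.succ).det *
      (A.submatrix Fin.succ Fin.castSucc).det) * hs

/-- Desnanot–Jacobi identity (Dodgson condensation). -/
theorem desnanot_jacobi {n : ℕ} (A : Matrix (Fin (n + 2)) (Fin (n + 2)) R) :
    A.det * (A.submatrix (fun i : Fin n => i.castSucc.succ) (fun i : Fin n => i.castSucc.succ)).det =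
      (A.submatrix Fin.castSucc Fin.castSucc).det * (A.submatrix Fin.succ Fin.succ).det -
      (A.submatrix Fin.castSucc Fin.succ).det * (A.submatrix Fin.succ Fin.castSucc).det := by
  have h := desnanot_jacobi_of_det_ne_zero
    (Matrix.mvPolynomialX (Fin (n + 2)) (Fin (n + 2)) ℤ) (Matrix.det_mvPolynomialX_ne_zero _ ℤ)
  have h' := congrArg (MvPolynomial.eval₂Hom (Int.castRingHom R) fun p : _ × _ => A p.1 p.2) h
  have hX := Matrix.mvPolynomialX_map_eval₂ (Int.castRingHom R) A
  simp only [map_mul, map_sub, RingHom.map_det, RingHom.mapMatrix_apply, ← Matrix.submatrix_map,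
    MvPolynomial.coe_eval₂Hom, hX] at h'
  exact h'

end Condensation

section MinorFormula
variable {R : Type*} [CommRing R]

/-- `n!` times the coefficient of `t ^ n` in `(1 + t) ^ (-x) * (1 - t) ^ (-y)`. -/
def binomConv (x y : R) : ℕ → R
  | 0 => 1
  | 1 => y - x
  | n + 2 => (y - x) * binomConv x y (n + 1) + (n + 1) * (x + y + n) * binomConv x y n

theorem binomConv_succ_left (x y : R) : ∀ n : ℕ, binomConv x y (n + 1) =
    binomConv (x + 1) y (n + 1) + (n + 1) * binomConv (x + 1) y n
  | 0 => by simp [binomConv]; ring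
  | 1 => by simp [binomConv]; ring
  | n + 2 => by
    have h1 := binomConv_succ_left x y (n + 1)
    have h0 := binomConv_succ_left x y n
    have e0 : binomConv x y (n + 3) = (y - x) * binomConv x y (n + 2) +
      ((n + 1 : ℕ) + 1) * (x + y + (n + 1 : ℕ)) * binomConv x y (n + 1) := rfl
    have e1 : binomConv (x + 1) y (n + 3) = (y - (x + 1)) * binomConv (x + 1) y (n + 2) +
      ((n + 1 : ℕ) + 1) * (x + 1 + y + (n + 1 : ℕ)) * binomConv (x + 1) y (n + 1) := rfl
    have e2 : binomConv (x + 1) y (n + 2) = (y - (x + 1)) * binomConv (x + 1) y (n + 1) +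
      (n + 1) * (x + 1 + y + n) * binomConv (x + 1) y n := rfl
    rw [e0, h1, h0, e1]
    push_cast
    linear_combination (-(n : R) - 2) * e2

theorem binomConv_succ_right (x y : R) : ∀ n : ℕ, binomConv x y (n + 1) =
    binomConv x (y + 1) (n + 1) - (n + 1) * binomConv x (y + 1) n
  | 0 => by simp [binomConv]; ring
  | 1 => by simp [binomConv]; ring
  | n + 2 => by
    have h1 := binomConv_succ_right x y (n + 1)
    have h0 := binomConv_succ_right x y n
    have e0 : binomConv x y (n + 3) = (y - x) * binomConv x y (n + 2) +
      ((n + 1 : ℕ) + 1) * (x + y + (n + 1 : ℕ)) * binomConv x y (n + 1) := rfl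
    have e1 : binomConv x (y + 1) (n + 3) = (y + 1 - x) * binomConv x (y + 1) (n + 2) +
      ((n + 1 : ℕ) + 1) * (x + (y + 1) + (n + 1 : ℕ)) * binomConv x (y + 1) (n + 1) := rfl
    have e2 : binomConv x (y + 1) (n + 2) = (y + 1 - x) * binomConv x (y + 1) (n + 1) +
      (n + 1) * (x + (y + 1) + n) * binomConv x (y + 1) n := rfl
    rw [e0, h1, h0, e1]
    push_cast
    linear_combination ((n : R) + 2) * e2

theorem binomConv_condensation (x y : R) : ∀ n : ℕ,
    binomConv x y (n + 2) * binomConv (x + 1) (y + 1) n *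
        ((n + 1) * (2 * x + y + 2 * n + 3) * (x + 2 * y + 2 * n + 3)) =
      (x + y + n + 1) * (x + 2 * n + 3) * (y + 2 * n + 3) *
        (binomConv x y (n + 1) * binomConv (x + 1) (y + 1) (n + 1)) -
      (x + y) * (x + 1) * (y + 1) *
        (binomConv (x + 2) (y - 1) (n + 1) * binomConv (x - 1) (y + 2) (n + 1))
  | 0 => by simp [binomConv]; ring
  | 1 => by simp [binomConv]; ring
  | 2 => by simp [binomConv]; ring
  | m + 3 => by
    obtain ⟨X, rfl⟩ : ∃ X, x = X - 2 := ⟨x + 2, by ring⟩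
    obtain ⟨Y, rfl⟩ : ∃ Y, y = Y - 2 := ⟨y + 2, by ring⟩
    have a : ∀ (Z W : R) (k : ℕ), binomConv (Z - 1) W (k + 1) =
        binomConv Z W (k + 1) + (k + 1) * binomConv Z W k := by
      intro Z W k; simpa using binomConv_succ_left (Z - 1) W k
    have b : ∀ (Z W : R) (k : ℕ), binomConv Z (W - 1) (k + 1) =
        binomConv Z W (k + 1) - (k + 1) * binomConv Z W k := by
      intro Z W k; simpa using binomConv_succ_right Z (W - 1) k
    have c : ∀ (Z W : R) (k : ℕ), binomConv (Z - 1) (W - 1) (k + 2) =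
        binomConv Z W (k + 2) - (k + 2) * (k + 1) * binomConv Z W k := by
      intro Z W k
      rw [b, a, a _ _ k]; push_cast; ring
    have c2 : ∀ k, binomConv (X - 2) (Y - 2) (k + 4) = binomConv X Y (k + 4) -
        2 * (k + 4) * (k + 3) * binomConv X Y (k + 2) +
        (k + 4) * (k + 3) * (k + 2) * (k + 1) * binomConv X Y k := by
      intro k
      rw [show X - 2 = X - 1 - 1 by ring, show Y - 2 = Y - 1 - 1 by ring, c _ _ (k + 2), c _ _ (k + 2),
        c _ _ k]
      push_cast; ring
    have a2 : ∀ k, binomConv (X - 2) Y (k + 2) = binomConv X Y (k + 2) +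
        2 * (k + 2) * binomConv X Y (k + 1) + (k + 2) * (k + 1) * binomConv X Y k := by
      intro k
      rw [show X - 2 = X - 1 - 1 by ring, a _ _ (k + 1), a _ _ (k + 1), a _ _ k]
      push_cast; ring
    have b2 : ∀ k, binomConv X (Y - 2) (k + 2) = binomConv X Y (k + 2) -
        2 * (k + 2) * binomConv X Y (k + 1) + (k + 2) * (k + 1) * binomConv X Y k := by
      intro k
      rw [show Y - 2 = Y - 1 - 1 by ring, b _ _ (k + 1), b _ _ (k + 1), b _ _ k]
      push_cast; ring
    have a3 : ∀ k, binomConv (X - 3) Y (k + 3) = binomConv X Y (k + 3) +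
        3 * (k + 3) * binomConv X Y (k + 2) + 3 * (k + 3) * (k + 2) * binomConv X Y (k + 1) +
        (k + 3) * (k + 2) * (k + 1) * binomConv X Y k := by
      intro k
      rw [show X - 3 = X - 2 - 1 by ring, a _ _ (k + 2), a2 (k + 1), a2 k]
      push_cast; ring
    have b3 : ∀ k, binomConv X (Y - 3) (k + 3) = binomConv X Y (k + 3) -
        3 * (k + 3) * binomConv X Y (k + 2) + 3 * (k + 3) * (k + 2) * binomConv X Y (k + 1) -
        (k + 3) * (k + 2) * (k + 1) * binomConv X Y k := by
      intro k
      rw [show Y - 3 = Y - 2 - 1 by ring, b _ _ (k + 2), b2 (k + 1), b2 k]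
      push_cast; ring
    have r : ∀ k, binomConv X Y (k + 2) = (Y - X) * binomConv X Y (k + 1) +
        (k + 1) * (X + Y + k) * binomConv X Y k := fun k => rfl
    rw [show X - 2 + 1 = X - 1 by ring, show Y - 2 + 1 = Y - 1 by ring,
      show X - 2 + 2 = X by ring, show Y - 2 + 2 = Y by ring, show Y - 2 - 1 = Y - 3 by ring,
      show X - 2 - 1 = X - 3 by ring]
    rw [show m + 3 + 2 = m + 1 + 4 from rfl, c2 (m + 1), c _ _ (m + 1), show m + 3 + 1 = m + 4 from rfl,
      c2 m, c _ _ (m + 2), b3 (m + 1), a3 (m + 1)]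
    simp only [show m + 1 + 4 = m + 3 + 2 from rfl, show m + 1 + 2 = m + 3 from rfl,
      show m + 1 + 3 = m + 4 from rfl, show m + 1 + 1 = m + 2 from rfl]
    have r2 := r m
    have r3 : binomConv X Y (m + 3) = _ := r (m + 1)
    have r4 : binomConv X Y (m + 4) = _ := r (m + 2)
    have r5 := r (m + 3)
    simp only [show m + 1 + 1 = m + 2 from rfl, show m + 2 + 1 = m + 3 from rfl,
      show m + 3 + 1 = m + 4 from rfl] at r2 r3 r4 r5
    rw [r5, r4, r3, r2]
    push_cast
    generalize binomConv X Y (m + 1) = p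
    generalize binomConv X Y m = q
    ring

end MinorFormula

section MinorFormula
variable {R : Type*} [CommRing R]

/-- The rising factorial `a (a + 1) ⋯ (a + k - 1)`. -/
def risingFac (a : R) (k : ℕ) : R := ∏ m ∈ range k, (a + m)

theorem risingFac_succ (a : R) (k : ℕ) : risingFac a (k + 1) = risingFac a k * (a + k) :=
  prod_range_succ _ _

theorem risingFac_succ' (a : R) (k : ℕ) : risingFac a (k + 1) = a * risingFac (a + 1) k := by
  rw [risingFac, prod_range_succ', mul_comm, risingFac]
  congr 1
  · simp
  · exact prod_congr rfl fun m _ => by push_cast; ring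

/-- The entries of the polynomial matrix whose contiguous minors factor. -/
def condEntry (x y : R) (i j : ℕ) : R :=
  risingFac (x + y + i) j * (y - x + 3 * j - 3 * i) * risingFac (x + 2 * i - j + 2) j *
    risingFac (y + 2 * j - i + 2) i

/-- The factors of the contiguous minors of `condEntry`. -/
def condFactor (x y : R) (i j k : ℕ) : R :=
  k.factorial * risingFac (x + y + i + k) j * risingFac (x + 2 * (i + k) + 2 - j) j *
    risingFac (y + 2 * (j + k) + 2 - i) i * risingFac (2 * x + y + 3 * i + 2 * k + 1) k *
    risingFac (x + 2 * y + 3 * j + 2 * k + 1) k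

/-- The value of the contiguous `n × n` minor of `condEntry` with upper left corner `(i, j)`. -/
def condMinor (x y : R) (i j n : ℕ) : R :=
  binomConv (x + 2 * i - j) (y + 2 * j - i) n * ∏ k ∈ range n, condFactor x y i j k

theorem condFactor_cross (x y : R) (i j k : ℕ) :
    condFactor x y (i + 1) j k * condFactor x y i (j + 1) k *
      ((x + y + i + j + k + 1) * (x + 2 * i - j + 2 * k + 3) * (y + 2 * j - i + 2 * k + 3)) =
    condFactor x y i j k * condFactor x y (i + 1) (j + 1) k *
      ((x + y + i + j + k) * (x + 2 * i - j + 2 * k + 1) * (y + 2 * j - i + 2 * k + 1)) := by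
  unfold condFactor
  push_cast
  rw [risingFac_succ (x + y + i + k), risingFac_succ (x + y + (i + 1) + k),
    risingFac_succ' (x + 2 * (i + k) + 2 - (j + 1)),
    risingFac_succ' (x + 2 * (i + 1 + k) + 2 - (j + 1)),
    risingFac_succ' (y + 2 * (j + k) + 2 - (i + 1)),
    risingFac_succ' (y + 2 * (j + 1 + k) + 2 - (i + 1))]
  rw [show x + 2 * (i + k : R) + 2 - (j + 1) + 1 = x + 2 * (i + k) + 2 - j by ring,
    show x + 2 * (i + 1 + k : R) + 2 - (j + 1) + 1 = x + 2 * (i + 1 + k) + 2 - j by ring,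
    show y + 2 * (j + k : R) + 2 - (i + 1) + 1 = y + 2 * (j + k) + 2 - i by ring,
    show y + 2 * (j + 1 + k : R) + 2 - (i + 1) + 1 = y + 2 * (j + 1 + k) + 2 - i by ring]
  ring

theorem condFactor_diag (x y : R) (i j k : ℕ) :
    condFactor x y (i + 1) (j + 1) k * ((k + 1) *
      (2 * (x + 2 * i - j) + (y + 2 * j - i) + 2 * k + 3) *
      ((x + 2 * i - j) + 2 * (y + 2 * j - i) + 2 * k + 3)) =
    condFactor x y i j (k + 1) *
      ((x + y + i + j + k + 1) * (x + 2 * i - j + 2 * k + 3) * (y + 2 * j - i + 2 * k + 3)) := by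
  unfold condFactor
  push_cast [Nat.factorial_succ]
  rw [risingFac_succ, risingFac_succ' (x + 2 * (i + 1 + k) + 2 - (j + 1)),
    risingFac_succ' (y + 2 * (j + 1 + k) + 2 - (i + 1)),
    risingFac_succ' (2 * x + y + 3 * i + 2 * (k + 1) + 1),
    risingFac_succ' (x + 2 * y + 3 * j + 2 * (k + 1) + 1)]
  rw [show x + 2 * (i + 1 + k : R) + 2 - (j + 1) + 1 = x + 2 * (i + (k + 1)) + 2 - j by ring,
    show y + 2 * (j + 1 + k : R) + 2 - (i + 1) + 1 = y + 2 * (j + (k + 1)) + 2 - i by ring,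
    show x + y + (i + 1 : R) + k = x + y + i + (k + 1) by ring,
    show 2 * x + y + 3 * (i + 1 : R) + 2 * k + 1 = 2 * x + y + 3 * i + 2 * (k + 1) + 1 + 1 by ring,
    show x + 2 * y + 3 * (j + 1 : R) + 2 * k + 1 = x + 2 * y + 3 * j + 2 * (k + 1) + 1 + 1 by ring]
  ring

theorem prod_condFactor_cross (x y : R) (i j n : ℕ) :
    (∏ k ∈ range n, condFactor x y (i + 1) j k) * (∏ k ∈ range n, condFactor x y i (j + 1) k) *
      ((x + y + i + j + n) * (x + 2 * i - j + 2 * n + 1) * (y + 2 * j - i + 2 * n + 1)) =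
    (∏ k ∈ range n, condFactor x y i j k) * (∏ k ∈ range n, condFactor x y (i + 1) (j + 1) k) *
      ((x + y + i + j) * (x + 2 * i - j + 1) * (y + 2 * j - i + 1)) := by
  induction n with
  | zero => simp
  | succ n ih =>
    have h := condFactor_cross x y i j n
    simp only [prod_range_succ]
    push_cast
    linear_combination (condFactor x y i j n * condFactor x y (i + 1) (j + 1) n) * ih +
      (∏ k ∈ range n, condFactor x y (i + 1) j k) * (∏ k ∈ range n, condFactor x y i (j + 1) k) * h

theorem condMinor_condensation [IsDomain R] (x y : R) (i j n : ℕ)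
    (hD : (x + y + i + j + n + 1) * (x + 2 * i - j + 2 * n + 3) * (y + 2 * j - i + 2 * n + 3) ≠ 0) :
    condMinor x y i j (n + 2) * condMinor x y (i + 1) (j + 1) n =
      condMinor x y i j (n + 1) * condMinor x y (i + 1) (j + 1) (n + 1) -
      condMinor x y i (j + 1) (n + 1) * condMinor x y (i + 1) j (n + 1) := by
  apply mul_right_cancel₀ hD
  have hS := binomConv_condensation (x + 2 * i - j) (y + 2 * j - i) n
  have hQ := prod_condFactor_cross x y i j (n + 1)
  have hq := condFactor_diag x y i j n
  unfold condMinor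
  push_cast at hQ ⊢
  rw [show x + 2 * (i + 1 : R) - (j + 1) = x + 2 * i - j + 1 by ring,
    show y + 2 * (j + 1 : R) - (i + 1) = y + 2 * j - i + 1 by ring,
    show x + 2 * (i + 1 : R) - j = x + 2 * i - j + 2 by ring,
    show y + 2 * (j + 1 : R) - i = y + 2 * j - i + 2 by ring,
    show x + 2 * (i : R) - (j + 1) = x + 2 * i - j - 1 by ring,
    show y + 2 * (j : R) - (i + 1) = y + 2 * j - i - 1 by ring]
  rw [prod_range_succ (condFactor x y i j) (n + 1)]
  rw [prod_range_succ (condFactor x y (i + 1) (j + 1)) n] at hQ ⊢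
  generalize (∏ k ∈ range n, condFactor x y (i + 1) (j + 1) k) = P0 at *
  generalize (∏ k ∈ range (n + 1), condFactor x y (i + 1) j k) = P1 at *
  generalize (∏ k ∈ range (n + 1), condFactor x y i (j + 1) k) = P2 at *
  generalize (∏ k ∈ range (n + 1), condFactor x y i j k) = P3 at *
  generalize condFactor x y (i + 1) (j + 1) n = q1 at *
  generalize condFactor x y i j (n + 1) = q2 at *
  generalize binomConv (x + 2 * i - j) (y + 2 * j - i) (n + 2) = s1 at *
  generalize binomConv (x + 2 * i - j + 1) (y + 2 * j - i + 1) n = s2 at *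
  generalize binomConv (x + 2 * i - j) (y + 2 * j - i) (n + 1) = s3 at *
  generalize binomConv (x + 2 * i - j + 1) (y + 2 * j - i + 1) (n + 1) = s4 at *
  generalize binomConv (x + 2 * i - j + 2) (y + 2 * j - i - 1) (n + 1) = s5 at *
  generalize binomConv (x + 2 * i - j - 1) (y + 2 * j - i + 2) (n + 1) = s6 at *
  linear_combination (P3 * P0 * q1) * hS - (s1 * s2 * P3 * P0) * hq - (-s5 * s6) * hQ

theorem det_condEntry_of_ne_zero [IsDomain R] (x y : R)
    (hD : ∀ i j n : ℕ, (x + y + i + j + n + 1) * (x + 2 * i - j + 2 * n + 3) *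
      (y + 2 * j - i + 2 * n + 3) ≠ 0)
    (hF : ∀ i j n : ℕ, condMinor x y i j n ≠ 0) : ∀ n i j : ℕ,
    (Matrix.of fun a b : Fin n => condEntry x y (i + a) (j + b)).det = condMinor x y i j n
  | 0, i, j => by simp [condMinor, binomConv]
  | 1, i, j => by
    simp [condMinor, binomConv, condEntry, condFactor, risingFac]
    ring_nf
  | n + 2, i, j => by
    have h := desnanot_jacobi (Matrix.of fun a b : Fin (n + 2) => condEntry x y (i + a) (j + b))
    have h00 := det_condEntry_of_ne_zero x y hD hF (n + 1) i j
    have h01 := det_condEntry_of_ne_zero x y hD hF (n + 1) i (j + 1)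
    have h10 := det_condEntry_of_ne_zero x y hD hF (n + 1) (i + 1) j
    have h11 := det_condEntry_of_ne_zero x y hD hF (n + 1) (i + 1) (j + 1)
    have hi := det_condEntry_of_ne_zero x y hD hF n (i + 1) (j + 1)
    apply mul_right_cancel₀ (hF (i + 1) (j + 1) n)
    rw [condMinor_condensation x y i j n (hD i j n), ← h00, ← h01, ← h10, ← h11, ← hi]
    simp only [add_assoc, add_comm 1]
    exact h

theorem map_binomConv {S : Type*} [CommRing S] (f : R →+* S) (x y : R) : ∀ n : ℕ,
    f (binomConv x y n) = binomConv (f x) (f y) n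
  | 0 => by simp [binomConv]
  | 1 => by simp [binomConv]
  | n + 2 => by simp [binomConv, map_binomConv f x y n, map_binomConv f x y (n + 1)]

theorem map_risingFac {S : Type*} [CommRing S] (f : R →+* S) (a : R) (k : ℕ) :
    f (risingFac a k) = risingFac (f a) k := by
  simp [risingFac]

theorem map_condEntry {S : Type*} [CommRing S] (f : R →+* S) (x y : R) (i j : ℕ) :
    f (condEntry x y i j) = condEntry (f x) (f y) i j := by
  simp [condEntry, map_risingFac, map_ofNat f 2, map_ofNat f 3]

theorem map_condFactor {S : Type*} [CommRing S] (f : R →+* S) (x y : R) (i j k : ℕ) :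
    f (condFactor x y i j k) = condFactor (f x) (f y) i j k := by
  simp [condFactor, map_risingFac, map_ofNat f 2, map_ofNat f 3]

theorem map_condMinor {S : Type*} [CommRing S] (f : R →+* S) (x y : R) (i j n : ℕ) :
    f (condMinor x y i j n) = condMinor (f x) (f y) i j n := by
  simp [condMinor, map_binomConv, map_condFactor, map_ofNat f 2]

theorem binomConv_pos {x y : ℚ} (h : x < y) (h' : 0 < x + y) : ∀ n : ℕ, 0 < binomConv x y n
  | 0 => by simp [binomConv]
  | 1 => by simpa [binomConv] using h
  | n + 2 => by
    have h0 := binomConv_pos h h' n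
    have h1 := binomConv_pos h h' (n + 1)
    have h2 : 0 < y - x := sub_pos.2 h
    simp only [binomConv]
    positivity

theorem risingFac_pos {a : ℚ} (h : 0 < a) (k : ℕ) : 0 < risingFac a k :=
  prod_pos fun m _ => by positivity

theorem condMinor_pos {x y : ℚ} {i j n : ℕ} (hx : (j : ℚ) < x)
    (hxy : 3 * (i : ℚ) < y - x) : 0 < condMinor x y i j n := by
  have hi : (0 : ℚ) ≤ i := i.cast_nonneg
  have hj : (0 : ℚ) ≤ j := j.cast_nonneg
  refine mul_pos (binomConv_pos (by linarith) (by linarith) n) (prod_pos fun k _ => ?_)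
  have hk : (0 : ℚ) ≤ k := k.cast_nonneg
  refine mul_pos (mul_pos (mul_pos (mul_pos (mul_pos ?_ ?_) ?_) ?_) ?_) ?_
  · exact_mod_cast k.factorial_pos
  all_goals exact risingFac_pos (by linarith) _

/-- The contiguous minors of `condEntry` at `x = y = 1`. -/
theorem det_condEntry_one (n i j : ℕ) :
    (Matrix.of fun a b : Fin n => condEntry (1 : ℚ) 1 (i + a) (j + b)).det =
      condMinor 1 1 i j n := by
  let x : Polynomial ℚ := 1 + Polynomial.X
  let y : Polynomial ℚ := 1 + 2 * Polynomial.X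
  have hN : ∀ (N : ℚ) (p : Polynomial ℚ), p.eval N ≠ 0 → p ≠ 0 := by
    rintro N p h rfl; simp at h
  have key := det_condEntry_of_ne_zero x y (fun i j n => hN (i + j) _ ?_)
    (fun i j n => hN (3 * i + j + 1) _ ?_) n i j
  · have := congrArg (Polynomial.evalRingHom (0 : ℚ)) key
    rw [RingHom.map_det, map_condMinor] at this
    have hx : Polynomial.evalRingHom (0 : ℚ) x = 1 := by simp [x]
    have hy : Polynomial.evalRingHom (0 : ℚ) y = 1 := by simp [y]
    rw [hx, hy] at this
    rw [← this]
    congr 1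
    ext a b
    rw [RingHom.mapMatrix_apply, Matrix.map_apply, Matrix.of_apply, Matrix.of_apply, map_condEntry,
      hx, hy]
  · have hi : (0 : ℚ) ≤ i := i.cast_nonneg
    have hj : (0 : ℚ) ≤ j := j.cast_nonneg
    have hn : (0 : ℚ) ≤ n := n.cast_nonneg
    simp only [x, y, Polynomial.eval_mul, Polynomial.eval_add, Polynomial.eval_sub, Polynomial.eval_natCast, Polynomial.eval_X, Polynomial.eval_one, Polynomial.eval_ofNat]
    refine (mul_pos (mul_pos ?_ ?_) ?_).ne' <;> linarith
  · have := map_condMinor (Polynomial.evalRingHom (3 * i + j + 1 : ℚ)) x y i j n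
    rw [Polynomial.coe_evalRingHom] at this
    rw [this]
    have hi : (0 : ℚ) ≤ i := i.cast_nonneg
    have hj : (0 : ℚ) ≤ j := j.cast_nonneg
    refine (condMinor_pos ?_ ?_).ne' <;>
    simp only [x, y, Polynomial.eval_mul, Polynomial.eval_add, Polynomial.eval_X, Polynomial.eval_one, Polynomial.eval_ofNat] <;> linarith

end MinorFormula

section MinorSum
open Matrix
open scoped Classical in
/-- Sums over pairs of a strictly increasing sequence and one of its positions, reorganised by
removing the entry at that position. -/
theorem sum_strictMono_succ {R : Type*} [AddCommMonoid R] {N M : ℕ}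
    (H : (Fin N → Fin M) → Fin M → R) (hH : ∀ u b, StrictMono u → b ∈ Set.range u → H u b = 0) :
    ∑ t : Fin (N + 1) → Fin M with StrictMono t, ∑ p, H (t ∘ p.succAbove) (t p) =
      ∑ u : Fin N → Fin M with StrictMono u, ∑ b, H u b := by
  have h1 : ∑ u : Fin N → Fin M with StrictMono u, ∑ b, H u b =
      ∑ x : (Fin N → Fin M) × Fin M with StrictMono x.1 ∧ x.2 ∉ Set.range x.1, H x.1 x.2 := by
    rw [← sum_product']
    symm
    apply sum_subset
    · intro x; simp; tauto
    · intro x hx hx'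
      simp at hx hx'
      exact hH _ _ hx (by simpa using hx' hx)
  rw [h1, ← sum_product']
  refine sum_bij (fun x _ => (x.1 ∘ x.2.succAbove, x.1 x.2)) ?_ ?_ ?_ ?_
  · rintro ⟨t, p⟩ h
    simp only [mem_product, mem_filter, mem_univ, true_and, and_true] at h ⊢
    refine ⟨h.comp (Fin.strictMono_succAbove p), ?_⟩
    rintro ⟨i, hi⟩
    exact Fin.succAbove_ne p i (h.injective hi)
  · rintro ⟨t, p⟩ h ⟨t', p'⟩ h' heq
    simp only [mem_product, mem_filter, mem_univ, true_and, and_true, Prod.mk.injEq] at h h' heq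
    have hr : ∀ (t : Fin (N + 1) → Fin M) p, Set.range t =
        insert (t p) (Set.range (t ∘ p.succAbove)) := by
      intro t p
      rw [Set.range_comp, Fin.range_succAbove, ← Set.image_insert_eq]
      simp [Set.insert_eq]
    have : t = t' := by
      apply (StrictMono.range_inj h h').1
      rw [hr t p, hr t' p', heq.1, heq.2]
    subst this
    exact Prod.ext rfl (h.injective heq.2)
  · rintro ⟨u, b⟩ h
    simp only [mem_filter, mem_univ, true_and] at h
    have hcard : (insert b (univ.image u)).card = N + 1 := by
      rw [card_insert_of_notMem (by simpa using h.2), card_image_of_injective _ h.1.injective]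
      simp
    let t := (insert b (univ.image u)).orderEmbOfFin hcard
    have ht : Set.range t = insert b (Set.range u) := by
      simp [t]
    obtain ⟨p, hp⟩ : b ∈ Set.range t := by rw [ht]; exact Set.mem_insert _ _
    refine ⟨(t, p), by simp [t.strictMono], ?_⟩
    refine Prod.ext ?_ hp
    apply (StrictMono.range_inj (t.strictMono.comp (Fin.strictMono_succAbove p)) h.1).1
    rw [Set.range_comp, Fin.range_succAbove, Set.compl_eq_univ_sdiff,
      Set.image_sdiff t.injective, Set.image_univ, ht, Set.image_singleton, hp]
    exact Set.insert_sdiff_self_of_notMem h.2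
  · intro x _; rfl

variable {R : Type*} [CommRing R]

open scoped Classical in
/-- The sum of the maximal minors of a matrix with sorted columns. -/
noncomputable def minorSum {m M : ℕ} (F : Matrix (Fin m) (Fin M) R) : R :=
  ∑ s : Fin m → Fin M with StrictMono s, (F.submatrix id s).det

theorem minorSum_mul {m M : ℕ} (L : Matrix (Fin m) (Fin m) R) (F : Matrix (Fin m) (Fin M) R) :
    minorSum (L * F) = L.det * minorSum F := by
  unfold minorSum
  rw [mul_sum]
  refine sum_congr rfl fun s _ => ?_
  rw [← det_mul]
  rfl

theorem minorSum_permute {m M : ℕ} (σ : Equiv.Perm (Fin m)) (F : Matrix (Fin m) (Fin M) R) :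
    minorSum (F.submatrix σ id) = (Equiv.Perm.sign σ : ℤ) * minorSum F := by
  unfold minorSum
  rw [mul_sum]
  refine sum_congr rfl fun s _ => ?_
  rw [← det_permute]
  rfl

open scoped Classical in
theorem sum_mul_minorSum_succAbove {N M : ℕ} (F : Matrix (Fin (N + 1)) (Fin M) R) (ψ : Fin M → R) :
    ∑ j : Fin (N + 1), (-1) ^ (j : ℕ) * (∑ b, ψ b * F j b) * minorSum (F.submatrix j.succAbove id) =
      ∑ s : Fin (N + 1) → Fin M with StrictMono s,
        (F.submatrix id s).det * ∑ p : Fin (N + 1), (-1) ^ (p : ℕ) * ψ (s p) := by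
  have h := sum_strictMono_succ (R := R) (N := N) (M := M) (fun u b => ψ b *
    ∑ j : Fin (N + 1), (-1) ^ (j : ℕ) * F j b * (F.submatrix j.succAbove u).det) ?_
  · trans
    · trans
      swap
      · exact h.symm
      simp only [minorSum, mul_sum, sum_mul]
      rw [sum_comm]
      refine sum_congr rfl fun u _ => ?_
      rw [sum_comm]
      refine sum_congr rfl fun b _ => sum_congr rfl fun j _ => ?_
      rw [submatrix_submatrix, Function.id_comp, Function.comp_id]
      ring
    · refine sum_congr rfl fun s _ => ?_
      rw [mul_sum]
      refine sum_congr rfl fun p _ => ?_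
      rw [det_succ_column _ p, mul_sum, sum_mul]
      refine sum_congr rfl fun j _ => ?_
      rw [submatrix_submatrix, submatrix_apply]
      have : (-1 : R) ^ (p : ℕ) * (-1) ^ (p : ℕ) = 1 := by rw [← mul_pow]; simp
      simp only [Function.id_comp, id_eq, pow_add]
      linear_combination (-(-1) ^ (j : ℕ) * F j (s p) * ψ (s p) *
        (F.submatrix j.succAbove (s ∘ p.succAbove)).det) * this
  · rintro u b - ⟨i, rfl⟩
    have h0 : (F.submatrix id (Fin.cons (u i) u : Fin (N + 1) → Fin M)).det = 0 :=
      det_zero_of_column_eq (Fin.succ_ne_zero i).symm (by simp)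
    rw [det_succ_column_zero] at h0
    exact mul_eq_zero_of_right _ h0

theorem two_mul_sum_range_neg_one_pow_sign {p n : ℕ} (h : p ≤ n) :
    2 * ∑ l ∈ range n, (-1 : R) ^ l * (if l < p then -1 else 1) =
      2 * (-1) ^ p - 1 - (-1) ^ n := by
  induction n, h using Nat.le_induction with
  | base =>
    have : ∀ l ∈ range p, (-1 : R) ^ l * (if l < p then -1 else 1) = -(-1) ^ l := by
      intro l hl; simp [mem_range.1 hl]
    rw [sum_congr rfl this, sum_neg_distrib]
    clear this
    induction p with
    | zero => norm_num
    | succ p ih => rw [sum_range_succ]; linear_combination ih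
  | succ n h ih =>
    rw [sum_range_succ, if_neg (by omega)]
    linear_combination ih

/-- The sign matrix with entries `sgn (b - a)`. -/
def sgnMatrix (R : Type*) [CommRing R] (M : ℕ) : Matrix (Fin M) (Fin M) R :=
  Matrix.of fun a b => if a < b then 1 else if b < a then -1 else 0

theorem sum_neg_one_pow_odd [IsDomain R] [CharZero R] (r : ℕ) :
    ∑ p : Fin (2 * r + 1), (-1 : R) ^ (p : ℕ) = 1 := by
  rw [Fin.sum_univ_eq_sum_range (fun p => (-1 : R) ^ p)]
  apply mul_left_cancel₀ (two_ne_zero (α := R))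
  have := two_mul_sum_range_neg_one_pow_sign (R := R) (Nat.zero_le (2 * r + 1))
  simp only [not_lt_zero, if_false, mul_one, pow_zero] at this
  rw [this, pow_succ, pow_mul]
  norm_num

theorem sum_sgnMatrix_succAbove [IsDomain R] [CharZero R] {r M : ℕ} {t : Fin (2 * r + 2) → Fin M}
    (ht : StrictMono t) (p : Fin (2 * r + 2)) :
    ∑ l : Fin (2 * r + 1), (-1) ^ (l : ℕ) * sgnMatrix R M (t p) (t (p.succAbove l)) =
      (-1) ^ (p : ℕ) := by
  apply mul_left_cancel₀ (two_ne_zero (α := R))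
  have h := two_mul_sum_range_neg_one_pow_sign (R := R) (p := p) (n := 2 * r + 1) (by omega)
  rw [← Fin.sum_univ_eq_sum_range (fun l => (-1 : R) ^ l * (if l < p then -1 else 1))] at h
  trans
  · trans
    swap
    · exact h
    congr 1
    refine sum_congr rfl fun l _ => ?_
    simp only [sgnMatrix, of_apply, ht.lt_iff_lt]
    by_cases hl : l.castSucc < p
    · rw [Fin.succAbove_of_castSucc_lt _ _ hl, if_neg hl.not_gt, if_pos hl, if_pos (by exact hl)]
    · have hl' : p < l.succ := by
        rw [not_lt] at hl
        exact lt_of_le_of_lt hl (Fin.castSucc_lt_succ)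
      rw [Fin.succAbove_of_le_castSucc _ _ (not_lt.1 hl), if_pos hl', if_neg (by exact hl)]
  · rw [pow_succ, pow_mul]; norm_num

theorem sum_sgnMatrix_self [IsDomain R] [CharZero R] {r M : ℕ} {t : Fin (2 * r + 1) → Fin M}
    (ht : StrictMono t) (p : Fin (2 * r + 1)) :
    ∑ l : Fin (2 * r + 1), (-1) ^ (l : ℕ) * sgnMatrix R M (t p) (t l) = 0 := by
  apply mul_left_cancel₀ (two_ne_zero (α := R))
  have h := two_mul_sum_range_neg_one_pow_sign (R := R) (p := p) (n := 2 * r + 1) (by omega)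
  rw [← Fin.sum_univ_eq_sum_range (fun l => (-1 : R) ^ l * (if l < p then -1 else 1))] at h
  have h2 : ∑ l : Fin (2 * r + 1), (-1) ^ (l : ℕ) * sgnMatrix R M (t p) (t l) =
      ∑ l : Fin (2 * r + 1), (-1 : R) ^ (l : ℕ) * (if (l : ℕ) < p then -1 else 1) -
      ∑ l : Fin (2 * r + 1), if l = p then (-1) ^ (l : ℕ) else 0 := by
    rw [← sum_sub_distrib]
    refine sum_congr rfl fun l _ => ?_
    simp only [sgnMatrix, of_apply, ht.lt_iff_lt]
    rcases lt_trichotomy l p with hl | hl | hl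
    · rw [if_neg hl.not_gt, if_pos hl, if_pos (by exact hl), if_neg hl.ne, sub_zero]
    · subst hl; simp
    · rw [if_pos hl, if_neg (by exact hl.not_gt), if_neg hl.ne', sub_zero]
  rw [h2, mul_sub, h, sum_ite_eq' univ p, if_pos (mem_univ _), pow_succ, pow_mul]
  norm_num

theorem minorSum_odd [IsDomain R] [CharZero R] {r M : ℕ}
    (F : Matrix (Fin (2 * r + 1)) (Fin M) R) :
    minorSum F = ∑ j : Fin (2 * r + 1), (-1) ^ (j : ℕ) * (∑ b, F j b) *
      minorSum (F.submatrix j.succAbove id) := by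
  have h := sum_mul_minorSum_succAbove F (fun _ => 1)
  simp only [one_mul, mul_one, sum_neg_one_pow_odd] at h
  exact h.symm

theorem minorSum_even [IsDomain R] [CharZero R] {r M : ℕ}
    (F : Matrix (Fin (2 * r + 2)) (Fin M) R) :
    minorSum F = ∑ j : Fin (2 * r + 1), (-1) ^ (j : ℕ) * (F * sgnMatrix R M * Fᵀ) 0 j.succ *
      minorSum (F.submatrix (Fin.succ ∘ j.succAbove) id) := by
  classical
  have h := sum_mul_minorSum_succAbove (F.submatrix Fin.succ id) (fun b => (F * sgnMatrix R M) 0 b)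
  have h2 := sum_strictMono_succ (R := R) (N := 2 * r + 1) (M := M) (fun u b => F 0 b *
    (F.submatrix Fin.succ u).det * ∑ l : Fin (2 * r + 1), (-1) ^ (l : ℕ) * sgnMatrix R M b (u l)) ?_
  · trans
    swap
    · exact h.symm
    trans
    · trans
      swap
      · exact h2
      refine sum_congr rfl fun t ht => ?_
      rw [det_succ_row_zero]
      refine sum_congr rfl fun p _ => ?_
      have := sum_sgnMatrix_succAbove (R := R) (mem_filter.1 ht).2 p
      simp only [Function.comp_apply, this, submatrix_apply, submatrix_submatrix, id_eq,
        Function.id_comp]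
      ring
    · refine sum_congr rfl fun u _ => ?_
      simp only [submatrix_submatrix, Function.comp_id, Function.id_comp, mul_apply, mul_sum]
      rw [sum_comm]
      exact sum_congr rfl fun b _ => sum_congr rfl fun j _ => by ring
  · rintro u b hu ⟨i, rfl⟩
    rw [sum_sgnMatrix_self hu, mul_zero]

end MinorSum

section MinorSum
open Matrix
variable {R : Type*} [CommRing R]

theorem transpose_sgnMatrix (M : ℕ) : (sgnMatrix R M)ᵀ = -sgnMatrix R M := by
  ext a b
  simp only [sgnMatrix, transpose_apply, of_apply]
  rcases lt_trichotomy a b with h | h | h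
  · simp [h, h.not_gt]
  · simp [h]
  · simp [h, h.not_gt]

theorem det_eq_sq_mul_of_row_zero {k : ℕ} (G : Matrix (Fin (k + 2)) (Fin (k + 2)) R)
    (hG : Gᵀ = -G) (h0 : ∀ j, j ≠ 1 → G 0 j = 0) :
    G.det = G 0 1 ^ 2 * (G.submatrix (Fin.succ ∘ Fin.succ) (Fin.succ ∘ Fin.succ)).det := by
  have hT : ∀ i j, G i j = -G j i := fun i j => by
    have := congrFun (congrFun hG j) i
    simpa using this
  rw [det_succ_row_zero, sum_eq_single 1 (fun j _ hj => by rw [h0 j hj]; ring) (by simp),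
    det_succ_column_zero, sum_eq_single 0 ?_ (by simp)]
  · have hs : (1 : Fin (k + 2)).succAbove ∘ Fin.succ = Fin.succ ∘ Fin.succ := by
      funext i
      simp [Fin.succAbove, Fin.lt_def]
    have h10 : (1 : Fin (k + 2)).succAbove (0 : Fin (k + 1)) = 0 := by
      simp [Fin.succAbove]
    rw [submatrix_submatrix, submatrix_apply, hs, h10, Fin.succAbove_zero, Fin.succ_zero_eq_one,
      hT 1 0]
    simp
    ring
  · intro i _ hi
    have h10 : (1 : Fin (k + 2)).succAbove (0 : Fin (k + 1)) = 0 := by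
      simp [Fin.succAbove]
    rw [submatrix_apply, h10, hT, h0]
    · ring
    · rw [← Fin.succ_zero_eq_one]
      exact fun h => hi (Fin.succ_injective _ h)

variable {K : Type*} [Field K] [CharZero K]

theorem minorSum_sq_of_row_zero {r M : ℕ} (F : Matrix (Fin (2 * r + 2)) (Fin M) K)
    (ih : ∀ F : Matrix (Fin (2 * r)) (Fin M) K,
      minorSum F ^ 2 = (F * sgnMatrix K M * Fᵀ).det)
    (h0 : ∀ j, j ≠ 1 → (F * sgnMatrix K M * Fᵀ) 0 j = 0) :
    minorSum F ^ 2 = (F * sgnMatrix K M * Fᵀ).det := by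
  have hG : (F * sgnMatrix K M * Fᵀ)ᵀ = -(F * sgnMatrix K M * Fᵀ) := by
    simp [Matrix.transpose_mul, transpose_sgnMatrix, Matrix.mul_assoc]
  rw [det_eq_sq_mul_of_row_zero _ hG h0, minorSum_even, sum_eq_single 0 ?_ (by simp)]
  · rw [Fin.succAbove_zero, Fin.succ_zero_eq_one, mul_pow, ih]
    simp
    left
    rfl
  · intro j _ hj
    rw [h0]
    · ring
    · rw [← Fin.succ_zero_eq_one]
      exact fun h => hj (Fin.succ_injective _ h)

theorem minorSum_sq_of_ne_zero {r M : ℕ} (F : Matrix (Fin (2 * r + 2)) (Fin M) K)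
    (ih : ∀ F : Matrix (Fin (2 * r)) (Fin M) K,
      minorSum F ^ 2 = (F * sgnMatrix K M * Fᵀ).det)
    (h0 : (F * sgnMatrix K M * Fᵀ) 0 1 ≠ 0) :
    minorSum F ^ 2 = (F * sgnMatrix K M * Fᵀ).det := by
  set G := F * sgnMatrix K M * Fᵀ with hGdef
  have hG : Gᵀ = -G := by
    simp [G, Matrix.transpose_mul, transpose_sgnMatrix, Matrix.mul_assoc]
  have hG0 : G 0 0 = 0 := by
    have := congrFun (congrFun hG 0) 0
    simpa [self_eq_neg] using this
  let β : Fin (2 * r + 2) → K := fun i => if (i : ℕ) ≤ 1 then 0 else G 0 i / G 0 1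
  let L : Matrix (Fin (2 * r + 2)) (Fin (2 * r + 2)) K :=
    Matrix.of fun i j => (1 : Matrix _ _ K) i j - (if j = 1 then β i else 0)
  have hdet : L.det = 1 := by
    rw [det_of_isLowerTriangular]
    · apply prod_eq_one
      intro i _
      simp only [L, of_apply, one_apply_eq]
      split_ifs with h
      · simp [h, β]
      · simp
    · intro i j hij
      have hij' : i < j := hij
      simp only [L, of_apply, one_apply_ne hij'.ne]
      split_ifs with h
      · subst h
        have : (i : ℕ) ≤ 1 := le_of_lt (by simpa [Fin.lt_def] using hij')
        simp [β, this]
      · simp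
  have hLG : (L * F) * sgnMatrix K M * (L * F)ᵀ = L * G * Lᵀ := by
    simp [G, Matrix.transpose_mul, Matrix.mul_assoc]
  have key := minorSum_sq_of_row_zero (L * F) ih ?_
  · rw [minorSum_mul, hLG, det_mul, det_mul, det_transpose, hdet] at key
    simpa using key
  · intro j hj
    rw [hLG, mul_apply]
    have hrow : ∀ k, (L * G) 0 k = G 0 k := by
      intro k
      have : ∀ x, L 0 x = (1 : Matrix (Fin (2 * r + 2)) (Fin (2 * r + 2)) K) 0 x := by intro x; simp [L, β]
      rw [mul_apply]
      simp [this, one_apply]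
    simp only [hrow, transpose_apply]
    simp only [L, of_apply, mul_sub, sum_sub_distrib, one_apply, mul_ite, mul_one, mul_zero,
      sum_ite_eq, sum_ite_eq', mem_univ, if_true]
    by_cases hj1 : (j : ℕ) ≤ 1
    · have : j = 0 := by
        have : (j : ℕ) ≠ 1 := fun h => hj (Fin.ext (by simpa using h))
        exact Fin.ext (show (j : ℕ) = 0 by omega)
      subst this
      simp [β, hG0]
    · simp only [β, if_neg hj1]
      field_simp
      ring

/-- The square of the sum of the maximal minors of a matrix with an even number of rows. -/
theorem minorSum_sq {M : ℕ} : ∀ {r : ℕ} (F : Matrix (Fin (2 * r)) (Fin M) K),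
    minorSum F ^ 2 = (F * sgnMatrix K M * Fᵀ).det
  | 0, F => by
    have : ∀ s : Fin (2 * 0) → Fin M, StrictMono s := fun s i => Fin.elim0 i
    simp [minorSum, this]
  | r + 1, F => by
    have ih : ∀ F : Matrix (Fin (2 * r)) (Fin M) K,
      minorSum F ^ 2 = (F * sgnMatrix K M * Fᵀ).det := fun F => minorSum_sq F
    change Matrix (Fin (2 * r + 2)) (Fin M) K at F
    change minorSum (m := 2 * r + 2) F ^ 2 = (F * sgnMatrix K M * Fᵀ).det
    have hG : (F * sgnMatrix K M * Fᵀ)ᵀ = -(F * sgnMatrix K M * Fᵀ) := by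
      simp [Matrix.transpose_mul, transpose_sgnMatrix, Matrix.mul_assoc]
    have hG0 : (F * sgnMatrix K M * Fᵀ) 0 0 = 0 := by
      have := congrFun (congrFun hG 0) 0
      simpa [self_eq_neg] using this
    by_cases h : ∃ j : Fin (2 * r + 1), (F * sgnMatrix K M * Fᵀ) 0 j.succ ≠ 0
    · obtain ⟨j, hj⟩ := h
      let σ : Equiv.Perm (Fin (2 * r + 2)) := Equiv.swap 1 j.succ
      have hσ : (F.submatrix σ id) * sgnMatrix K M * (F.submatrix σ id)ᵀ =
          (F * sgnMatrix K M * Fᵀ).submatrix σ σ := rfl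
      have h0 : σ 0 = 0 := Equiv.swap_apply_of_ne_of_ne (by simp) (Fin.succ_ne_zero j).symm
      have key := minorSum_sq_of_ne_zero (F.submatrix σ id) ih (by
        rw [hσ, submatrix_apply, h0]
        simpa [σ] using hj)
      rw [hσ, det_submatrix_equiv_self, minorSum_permute, mul_pow] at key
      rw [← key]
      rcases Int.units_eq_one_or (Equiv.Perm.sign σ) with h | h <;> simp [h]
    · push Not at h
      rw [minorSum_even, det_eq_zero_of_row_eq_zero 0]
      · simp [h]
      · intro j
        induction j using Fin.cases with
        | zero => exact hG0
        | succ j => exact h j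

end MinorSum

section GramMatrix
open Matrix Polynomial

/-- The polynomial `X ^ (2 (n - i)) (1 + X) ^ i`. -/
noncomputable def stepPoly (n i : ℕ) : ℚ[X] := X ^ (2 * n - 2 * i) * (1 + X) ^ i

theorem stepPoly_succ_sub {n i : ℕ} (h : i < n) :
    stepPoly n (i + 1) = (1 - X) * ((1 + 2 * X) * stepPoly (n - 1) i) + 2 * stepPoly n i := by
  obtain ⟨k, rfl⟩ : ∃ k, n = i + 1 + k := ⟨n - (i + 1), by omega⟩
  unfold stepPoly
  rw [show 2 * (i + 1 + k) - 2 * (i + 1) = 2 * k by omega,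
    show 2 * (i + 1 + k - 1) - 2 * i = 2 * k by omega,
    show 2 * (i + 1 + k) - 2 * i = 2 * k + 2 by omega]
  ring

theorem natDegree_stepPoly_le (n i : ℕ) (h : i ≤ n) : (stepPoly n i).natDegree ≤ 2 * n - i := by
  unfold stepPoly
  have : (1 + X : ℚ[X]).natDegree ≤ 1 := by compute_degree
  refine natDegree_mul_le.trans ?_
  rw [natDegree_X_pow]
  have := natDegree_pow_le_of_le i this
  omega

theorem sum_range_coeff_one_sub_X_mul (d : ℚ[X]) (k : ℕ) :
    ∑ b ∈ range (k + 1), ((1 - X) * d).coeff b = d.coeff k := by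
  induction k with
  | zero => simp [sub_mul]
  | succ k ih => rw [sum_range_succ, ih]; simp [sub_mul, coeff_X_mul]

theorem sum_sgnMatrix_mul_coeff {M : ℕ} (d : ℚ[X]) (hd : d.coeff (M - 1) = 0) (a : Fin M) :
    ∑ b : Fin M, sgnMatrix ℚ M a b * ((1 - X) * d).coeff b = -((1 + X) * d).coeff a := by
  obtain ⟨M, rfl⟩ : ∃ m, M = m + 1 := ⟨M - 1, by have := a.pos; omega⟩
  have h1 : ∀ b : Fin (M + 1), sgnMatrix ℚ (M + 1) a b * ((1 - X) * d).coeff b =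
      ((1 - X) * d).coeff b - 2 * (if (b : ℕ) < a then ((1 - X) * d).coeff b else 0) -
        (if b = a then ((1 - X) * d).coeff b else 0) := by
    intro b
    simp only [sgnMatrix, of_apply]
    rcases lt_trichotomy a b with h | h | h
    · have h' : ¬ (b : ℕ) < a := by have := Fin.lt_def.1 h; omega
      simp [h, h', h.ne']
    · subst h; simp
    · have h' : (b : ℕ) < a := h
      simp only [if_neg h.not_gt, if_pos h, if_pos h', if_neg h.ne]; ring
  have h2 : ∑ b : Fin (M + 1), (if (b : ℕ) < a then ((1 - X) * d).coeff b else 0) =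
      ∑ b ∈ range a, ((1 - X) * d).coeff b := by
    rw [Fin.sum_univ_eq_sum_range (fun b => if b < (a : ℕ) then ((1 - X) * d : ℚ[X]).coeff b else (0 : ℚ)),
      ← sum_filter]
    congr 1
    ext b
    simp
    have := a.2
    omega
  rw [sum_congr rfl fun b _ => h1 b, sum_sub_distrib, sum_sub_distrib, ← mul_sum, h2,
    sum_ite_eq' univ a, if_pos (mem_univ _),
    Fin.sum_univ_eq_sum_range (fun b => ((1 - X) * d : ℚ[X]).coeff b), sum_range_coeff_one_sub_X_mul]
  simp only [Nat.add_sub_cancel] at hd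
  rw [hd]
  rcases ha : (a : ℕ) with _ | k
  · simp [sub_mul, add_mul]
  · rw [sum_range_coeff_one_sub_X_mul]
    simp [sub_mul, add_mul, coeff_X_mul]
    ring

theorem reflect_stepPoly (n i : ℕ) (h : i ≤ n) :
    reflect (2 * n) (stepPoly n i) = X ^ i * (1 + X) ^ i := by
  have h1 : ∀ i : ℕ, reflect i ((1 + X : ℚ[X]) ^ i) = (1 + X) ^ i := by
    intro i
    induction i with
    | zero => simp
    | succ i ih =>
      have hd : (1 + X : ℚ[X]).natDegree ≤ 1 := by compute_degree
      rw [pow_succ, reflect_mul _ _ (by simpa using natDegree_pow_le_of_le i hd) hd, ih]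
      congr 1
      simp
      ring
  unfold stepPoly
  have hd : (1 + X : ℚ[X]).natDegree ≤ 1 := by compute_degree
  rw [show 2 * n = (2 * n - 2 * i + i) + i by omega,
    reflect_mul _ _ (by simp; omega) (by simpa using natDegree_pow_le_of_le i hd), h1]
  congr 1
  rw [show 2 * n - 2 * i + i + i - 2 * i = 2 * n - 2 * i by omega]
  rw [reflect_monomial, revAt_le (by omega)]
  congr 1
  omega

theorem sum_coeff_mul_coeff (n : ℕ) (p q : ℚ[X]) :
    ∑ a : Fin (n + 1), p.coeff a * q.coeff a = (p * reflect n q).coeff n := by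
  rw [coeff_mul, Finset.Nat.sum_antidiagonal_eq_sum_range_succ_mk,
    Fin.sum_univ_eq_sum_range (fun a => p.coeff a * q.coeff a)]
  refine sum_congr rfl fun a ha => ?_
  simp only [mem_range] at ha
  rw [coeff_reflect, revAt_le (by omega)]
  congr 2
  omega

/-- The rows `stepPoly n (i + 1) - 2 * stepPoly n i` as coefficient vectors. -/
noncomputable def diffMatrix (n : ℕ) : Matrix (Fin n) (Fin (2 * n + 1)) ℚ :=
  Matrix.of fun i a => ((1 - X) * ((1 + 2 * X) * stepPoly (n - 1) i)).coeff a

theorem sgnMatrix_mul_diffMatrix (n : ℕ) (a : Fin (2 * n + 1)) (j : Fin n) :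
    (sgnMatrix ℚ (2 * n + 1) * (diffMatrix n)ᵀ) a j =
      -((1 + X) * ((1 + 2 * X) * stepPoly (n - 1) j)).coeff a := by
  rw [mul_apply]
  simp only [transpose_apply, diffMatrix, of_apply]
  apply sum_sgnMatrix_mul_coeff
  apply coeff_eq_zero_of_natDegree_lt
  have h1 := natDegree_stepPoly_le (n - 1) j (by omega)
  have h2 : (1 + 2 * X : ℚ[X]).natDegree ≤ 1 := by compute_degree
  have h3 := natDegree_mul_le (p := (1 + 2 * X : ℚ[X])) (q := stepPoly (n - 1) j)
  have := j.2
  omega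

theorem gram_diffMatrix_coeff (n : ℕ) (i j : Fin n) :
    (diffMatrix n * sgnMatrix ℚ (2 * n + 1) * (diffMatrix n)ᵀ) i j =
      -(X ^ (j : ℕ) * ((2 + 3 * X - 3 * X ^ 2 - 2 * X ^ 3) * (1 + X) ^ ((i : ℕ) + j + 1)) : ℚ[X]).coeff
        (2 * i + 2) := by
  rw [Matrix.mul_assoc, mul_apply]
  simp only [sgnMatrix_mul_diffMatrix, mul_neg, sum_neg_distrib]
  congr 1
  have hi := i.2
  have hj := j.2
  simp only [diffMatrix, of_apply]
  rw [sum_coeff_mul_coeff (2 * n)]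
  have h1 := natDegree_stepPoly_le (n - 1) j (by omega)
  have h2 : (1 + X : ℚ[X]).natDegree ≤ 1 := by compute_degree
  have h3 : (1 + 2 * X : ℚ[X]).natDegree ≤ 1 := by compute_degree
  have h4 := natDegree_mul_le (p := (1 + 2 * X : ℚ[X])) (q := stepPoly (n - 1) j)
  have hr1 : reflect 1 (1 + X : ℚ[X]) = 1 + X := by simp; ring
  have hr2 : reflect 1 (1 + 2 * X : ℚ[X]) = 2 + X := by
    rw [reflect_add, ← map_ofNat C 2, reflect_C_mul]
    simp; ring
  rw [show 2 * n = 1 + (1 + 2 * (n - 1)) by omega, reflect_mul _ _ h2 (by omega),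
    reflect_mul _ _ h3 (by omega), reflect_stepPoly _ _ (by omega), hr1, hr2]
  unfold stepPoly
  rw [show (1 - X) * ((1 + 2 * X) * (X ^ (2 * (n - 1) - 2 * (i : ℕ)) * (1 + X) ^ (i : ℕ))) *
      ((1 + X) * ((2 + X) * (X ^ (j : ℕ) * (1 + X) ^ (j : ℕ)))) = X ^ (2 * (n - 1) - 2 * (i : ℕ)) *
      (X ^ (j : ℕ) * ((2 + 3 * X - 3 * X ^ 2 - 2 * X ^ 3) * (1 + X) ^ ((i : ℕ) + j + 1)) : ℚ[X]) by
    ring]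
  rw [show 1 + (1 + 2 * (n - 1)) = (2 * i + 2) + (2 * (n - 1) - 2 * i) by omega, coeff_X_pow_mul]

end GramMatrix

section GramMatrix
open Matrix Polynomial

theorem natDegree_cubic_mul_le (s : ℕ) :
    ((2 + 3 * X - 3 * X ^ 2 - 2 * X ^ 3) * (1 + X) ^ s : ℚ[X]).natDegree ≤ s + 3 := by
  have h1 : (2 + 3 * X - 3 * X ^ 2 - 2 * X ^ 3 : ℚ[X]).natDegree ≤ 3 := by compute_degree
  have h2 : (1 + X : ℚ[X]).natDegree ≤ 1 := by compute_degree
  have h3 := natDegree_pow_le_of_le s h2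
  have h4 := natDegree_mul_le (p := (2 + 3 * X - 3 * X ^ 2 - 2 * X ^ 3 : ℚ[X]))
    (q := (1 + X) ^ s)
  omega

theorem coeff_cubic_mul (s : ℕ) : ∀ K K' : ℕ, K + K' = s + 3 →
    ((2 + 3 * X - 3 * X ^ 2 - 2 * X ^ 3) * (1 + X) ^ s : ℚ[X]).coeff K =
      s.factorial / (K.factorial * K'.factorial) * (2 * K' * (K' - 1) * (K' - 2) +
        3 * K * K' * (K' - 1) - 3 * K * (K - 1) * K' - 2 * K * (K - 1) * (K - 2)) := by
  induction s with
  | zero =>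
    intro K K' h
    obtain ⟨rfl, rfl⟩ | ⟨rfl, rfl⟩ | ⟨rfl, rfl⟩ | ⟨rfl, rfl⟩ : (K = 0 ∧ K' = 3) ∨
      (K = 1 ∧ K' = 2) ∨ (K = 2 ∧ K' = 1) ∨ (K = 3 ∧ K' = 0) := by omega
    all_goals
      rw [← C_ofNat 2, ← C_ofNat 3]
      simp [coeff_X, coeff_C, coeff_X_pow, Nat.factorial]
      try norm_num
  | succ s ih =>
    intro K K' h
    have hstep : ((2 + 3 * X - 3 * X ^ 2 - 2 * X ^ 3) * (1 + X) ^ (s + 1) : ℚ[X]) =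
      (2 + 3 * X - 3 * X ^ 2 - 2 * X ^ 3) * (1 + X) ^ s +
        X * ((2 + 3 * X - 3 * X ^ 2 - 2 * X ^ 3) * (1 + X) ^ s) := by ring
    rw [hstep, coeff_add]
    rcases K with _ | K
    · obtain rfl : K' = s + 4 := by omega
      rw [ih 0 (s + 3) (by omega)]
      have : (s.factorial : ℚ) ≠ 0 := by exact_mod_cast s.factorial_ne_zero
      simp only [Nat.factorial_succ, Nat.factorial_zero, coeff_X_mul_zero]
      push_cast
      field_simp
      ring
    · rw [coeff_X_mul]
      rcases K' with _ | K'
      · obtain rfl : K = s + 3 := by omega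
        rw [ih (s + 3) 0 (by omega), coeff_eq_zero_of_natDegree_lt (by
          have := natDegree_cubic_mul_le s; omega)]
        have : (s.factorial : ℚ) ≠ 0 := by exact_mod_cast s.factorial_ne_zero
        simp only [Nat.factorial_succ, Nat.factorial_zero]
        push_cast
        field_simp
        ring
      · rw [ih (K + 1) K' (by omega), ih K (K' + 1) (by omega)]
        have h1 : (K.factorial : ℚ) ≠ 0 := by exact_mod_cast K.factorial_ne_zero
        have h2 : (K'.factorial : ℚ) ≠ 0 := by exact_mod_cast K'.factorial_ne_zero
        have hs : (s : ℚ) = K + K' - 2 + 1 - 1 + 1 - 2 + 1 := by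
          have : ((K + 1 + (K' + 1) : ℕ) : ℚ) = (s + 1 + 3 : ℕ) := by rw [h]
          push_cast at this
          linarith
        simp only [Nat.factorial_succ]
        push_cast
        field_simp
        rw [hs]
        ring

theorem risingFac_natCast_add_one (k m : ℕ) :
    risingFac ((k : ℚ) + 1) m = (k + m).factorial / k.factorial := by
  have hk : (k.factorial : ℚ) ≠ 0 := by exact_mod_cast k.factorial_ne_zero
  induction m with
  | zero => simp [risingFac, div_self hk]
  | succ m ih =>
    rw [risingFac_succ, ih, ← add_assoc, Nat.factorial_succ]
    push_cast
    ring

theorem risingFac_eq_zero {R : Type*} [CommRing R] {a : R} {k m : ℕ} (h : a + m = 0) (hm : m < k) :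
    risingFac a k = 0 :=
  prod_eq_zero (mem_range.2 hm) h

theorem gram_diffMatrix (n : ℕ) (i j : Fin n) :
    (diffMatrix n * sgnMatrix ℚ (2 * n + 1) * (diffMatrix n)ᵀ) i j =
      -((3 * i + 4) * (((i : ℕ) + 1).factorial / (2 * (i : ℕ) + 2).factorial) *
        ((3 * j + 4) / (2 * (j : ℕ) + 2).factorial) * condEntry (1 : ℚ) 1 i j) := by
  rw [gram_diffMatrix_coeff, neg_inj, coeff_X_pow_mul']
  generalize (i : ℕ) = i
  generalize (j : ℕ) = j
  split_ifs with h1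
  · obtain ⟨K, hK⟩ : ∃ K, 2 * i + 2 = K + j := ⟨2 * i + 2 - j, by omega⟩
    rw [hK, Nat.add_sub_cancel]
    have hKq : (K : ℚ) = 2 * i + 2 - j := by
      have : ((2 * i + 2 : ℕ) : ℚ) = (K + j : ℕ) := by rw [hK]
      push_cast at this
      linarith
    by_cases h2 : i ≤ 2 * j + 2
    · obtain ⟨K', hK'⟩ : ∃ K', 2 * j + 2 = K' + i := ⟨2 * j + 2 - i, by omega⟩
      have hKq' : (K' : ℚ) = 2 * j + 2 - i := by
        have : ((2 * j + 2 : ℕ) : ℚ) = (K' + i : ℕ) := by rw [hK']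
        push_cast at this
        linarith
      rw [coeff_cubic_mul _ K K' (by omega), condEntry,
        show (1 + 1 + i : ℚ) = ((i + 1 : ℕ) : ℚ) + 1 by push_cast; ring,
        show (1 + 2 * i - j + 2 : ℚ) = (K : ℚ) + 1 by rw [hKq]; ring,
        show (1 + 2 * j - i + 2 : ℚ) = (K' : ℚ) + 1 by rw [hKq']; ring,
        risingFac_natCast_add_one, risingFac_natCast_add_one, risingFac_natCast_add_one, ← hK, ← hK',
        show i + 1 + j = i + j + 1 by ring, hKq, hKq']
      have hf : ∀ k : ℕ, (k.factorial : ℚ) ≠ 0 := fun k => by exact_mod_cast k.factorial_ne_zero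
      have a1 := hf (i + 1)
      have a2 := hf (2 * i + 2)
      have a3 := hf (2 * j + 2)
      have a4 := hf K
      have a5 := hf K'
      field_simp
      ring
    · rw [coeff_eq_zero_of_natDegree_lt (by
        have := natDegree_cubic_mul_le (i + j + 1); omega), condEntry,
        risingFac_eq_zero (a := (1 + 2 * j - i + 2 : ℚ)) (m := i - (2 * j + 3)) (by
          rw [Nat.cast_sub (by omega)]; push_cast; ring) (by omega)]
      ring
  · rw [condEntry, risingFac_eq_zero (a := (1 + 2 * i - j + 2 : ℚ)) (m := j - (2 * i + 3)) (by
      rw [Nat.cast_sub (by omega)]; push_cast; ring) (by omega)]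
    ring

end GramMatrix

section GramMatrix
open Matrix Polynomial

theorem asmProd_succ (n : ℕ) :
    ∏ i ∈ range (n + 2), (Nat.factorial (3 * i + 1) : ℚ) / Nat.factorial (n + 2 + i) =
      (∏ i ∈ range (n + 1), (Nat.factorial (3 * i + 1) : ℚ) / Nat.factorial (n + 1 + i)) *
        ((3 * n + 4).factorial * (n + 1).factorial /
          ((2 * n + 2).factorial * (2 * n + 3).factorial)) := by
  have h1 := prod_range_succ (fun i => (Nat.factorial (n + 1 + i) : ℚ)) (n + 1)
  have h2 := prod_range_succ' (fun i => (Nat.factorial (n + 1 + i) : ℚ)) (n + 1)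
  have h3 : ∏ i ∈ range (n + 1), (Nat.factorial (n + 1 + (i + 1)) : ℚ) =
      ∏ i ∈ range (n + 1), (Nat.factorial (n + 2 + i) : ℚ) :=
    prod_congr rfl fun i _ => by rw [show n + 1 + (i + 1) = n + 2 + i by omega]
  rw [h1, h3, show n + 1 + (n + 1) = 2 * n + 2 by omega] at h2
  have hne : ∀ m, ∏ i ∈ range (n + 1), (Nat.factorial (m + i) : ℚ) ≠ 0 :=
    fun m => prod_ne_zero_iff.2 fun i _ => by positivity
  rw [prod_range_succ, prod_div_distrib, prod_div_distrib,
    show 3 * (n + 1) + 1 = 3 * n + 4 by omega, show n + 2 + (n + 1) = 2 * n + 3 by omega]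
  have := hne (n + 1)
  have := hne (n + 2)
  field_simp
  simp only [add_zero] at h2
  linear_combination h2

theorem risingFac_cast_eq {a : ℚ} (k m : ℕ) (h : a = k + 1) :
    risingFac a m = (k + m).factorial / k.factorial := by
  rw [h, risingFac_natCast_add_one]

theorem prod_condFactor_zero (m : ℕ) :
    m.factorial * ∏ k ∈ range m, ((3 * (k : ℚ) + 4) ^ 2 * (k + 1).factorial /
        (2 * k + 2).factorial ^ 2 * condFactor (1 : ℚ) 1 0 0 k) =
      (∏ i ∈ range (m + 1), (Nat.factorial (3 * i + 1) : ℚ) / Nat.factorial (m + 1 + i)) ^ 2 := by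
  induction m with
  | zero => simp
  | succ m ih =>
    have h : risingFac (2 * (m : ℚ) + 4) m = (3 * m + 3).factorial / (2 * m + 3).factorial := by
      rw [risingFac_cast_eq (2 * m + 3) m (by push_cast; ring)]
      congr 3; omega
    have hc : condFactor (1 : ℚ) 1 0 0 m = m.factorial * risingFac (2 * (m : ℚ) + 4) m ^ 2 := by
      have e : (2 * 1 + 1 + 3 * ((0 : ℕ) : ℚ) + 2 * m + 1) = 2 * m + 4 := by push_cast; ring
      have e' : (1 + 2 * 1 + 3 * ((0 : ℕ) : ℚ) + 2 * m + 1) = 2 * m + 4 := by push_cast; ring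
      rw [condFactor, e, e']
      simp [risingFac]
      ring
    rw [asmProd_succ, mul_pow, ← ih, prod_range_succ, hc, h, Nat.factorial_succ m,
      Nat.factorial_succ (3 * m + 3)]
    push_cast
    field_simp
    ring

theorem prod_condFactor_one (m : ℕ) :
    2 * m.factorial * (m + 2) * ∏ k ∈ range m, ((3 * (k + 1 : ℚ) + 4) ^ 2 * (k + 2).factorial /
        (2 * k + 4).factorial ^ 2 * condFactor (1 : ℚ) 1 1 1 k) =
      (∏ i ∈ range (m + 2), (Nat.factorial (3 * i + 1) : ℚ) / Nat.factorial (m + 2 + i)) ^ 2 := by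
  induction m with
  | zero => simp [prod_range_succ, Nat.factorial]; norm_num
  | succ m ih =>
    have h : risingFac (2 * (m : ℚ) + 7) m = (3 * m + 6).factorial / (2 * m + 6).factorial := by
      rw [risingFac_cast_eq (2 * m + 6) m (by push_cast; ring)]
      congr 3; omega
    have hc : condFactor (1 : ℚ) 1 1 1 m = m.factorial * (m + 3) * (2 * m + 4) ^ 2 *
        risingFac (2 * (m : ℚ) + 7) m ^ 2 := by
      have e : (2 * 1 + 1 + 3 * ((1 : ℕ) : ℚ) + 2 * m + 1) = 2 * m + 7 := by push_cast; ring
      have e' : (1 + 2 * 1 + 3 * ((1 : ℕ) : ℚ) + 2 * m + 1) = 2 * m + 7 := by push_cast; ring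
      rw [condFactor, e, e']
      have e1 : ∀ a : ℚ, risingFac a 1 = a := by simp [risingFac]
      rw [e1, e1]
      push_cast
      ring
    rw [asmProd_succ (m + 1), mul_pow, ← ih, prod_range_succ, hc, h, Nat.factorial_succ m,
      show 3 * (m + 1) + 4 = 3 * m + 6 + 1 by omega, show 2 * (m + 1) + 2 = 2 * m + 4 by omega,
      show 2 * (m + 1) + 3 = 2 * m + 5 by omega,
      Nat.factorial_succ (3 * m + 6), Nat.factorial_succ (2 * m + 5), Nat.factorial_succ (m + 1),
      Nat.factorial_succ m]
    push_cast
    field_simp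
    ring

theorem binomConv_one_one_even (r : ℕ) : binomConv (1 : ℚ) 1 (2 * r) = (2 * r).factorial := by
  induction r with
  | zero => simp [binomConv]
  | succ r ih =>
    rw [show 2 * (r + 1) = 2 * r + 2 by ring, binomConv, ih, Nat.factorial_succ,
      Nat.factorial_succ]
    push_cast
    ring

theorem binomConv_two_two_even (r : ℕ) :
    binomConv (2 : ℚ) 2 (2 * r) = (2 * r).factorial * (r + 1) := by
  induction r with
  | zero => simp [binomConv]
  | succ r ih =>
    rw [show 2 * (r + 1) = 2 * r + 2 by ring, binomConv, ih, Nat.factorial_succ,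
      Nat.factorial_succ]
    push_cast
    ring

theorem det_scaled_condEntry (r s : ℕ) {A : Matrix (Fin (2 * r)) (Fin (2 * r)) ℚ}
    (hA : ∀ a b : Fin (2 * r), A a b = -((3 * (s + a) + 4) *
      ((s + a + 1).factorial / (2 * (s + a) + 2).factorial) *
      ((3 * (s + b) + 4) / (2 * (s + b) + 2).factorial) * condEntry (1 : ℚ) 1 (s + a) (s + b))) :
    A.det = binomConv (1 + s : ℚ) (1 + s) (2 * r) *
      ∏ k ∈ range (2 * r), ((3 * ((k : ℚ) + s) + 4) ^ 2 * (k + s + 1).factorial /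
        (2 * (k + s) + 2).factorial ^ 2 * condFactor (1 : ℚ) 1 s s k) := by
  have h : A = -of fun a b : Fin (2 * r) => ((3 * ((s : ℚ) + a) + 4) *
      ((s + a + 1).factorial / (2 * (s + a) + 2).factorial)) *
      (of fun a b : Fin (2 * r) => ((3 * ((s : ℚ) + b) + 4) / (2 * (s + b) + 2).factorial) *
        (of fun a b : Fin (2 * r) => condEntry (1 : ℚ) 1 (s + a) (s + b)) a b) a b := by
    ext a b
    simp [hA]
    ring
  rw [h, det_neg, det_mul_column, det_mul_row, det_condEntry_one, condMinor]
  have e : (1 : ℚ) + 2 * s - s = 1 + s := by ring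
  rw [e, Fintype.card_fin, pow_mul]
  have p1 := prod_range (n := 2 * r) (fun a : ℕ => (3 * ((s : ℚ) + a) + 4) *
      ((s + a + 1).factorial / (2 * (s + a) + 2).factorial))
  have p2 := prod_range (n := 2 * r) (fun b : ℕ =>
    ((3 * ((s : ℚ) + b) + 4) / (2 * (s + b) + 2).factorial))
  rw [← p1, ← p2]
  simp only [prod_mul_distrib, prod_div_distrib, prod_pow, add_comm _ s, add_comm _ (s : ℚ)]
  ring

end GramMatrix

section GramMatrix
open Matrix Polynomial

/-- The coefficient vectors of `stepPoly n 0, …, stepPoly n n`. -/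
noncomputable def stepMatrix (n : ℕ) : Matrix (Fin (n + 1)) (Fin (2 * n + 1)) ℚ :=
  of fun i a => (stepPoly n i).coeff a

/-- The rows of `stepMatrix n` after subtracting from each row twice its predecessor. -/
noncomputable def reducedStepMatrix (n : ℕ) : Matrix (Fin (n + 1)) (Fin (2 * n + 1)) ℚ :=
  of fun i a => Fin.cases (if a = Fin.last _ then 1 else 0) (fun j => diffMatrix n j a) i

theorem reducedStepMatrix_zero (n : ℕ) (a : Fin (2 * n + 1)) :
    reducedStepMatrix n 0 a = if a = Fin.last _ then 1 else 0 := rfl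

theorem reducedStepMatrix_succ (n : ℕ) (i : Fin n) (a : Fin (2 * n + 1)) :
    reducedStepMatrix n i.succ a = diffMatrix n i a := rfl

theorem minorSum_stepMatrix (n : ℕ) : minorSum (stepMatrix n) = minorSum (reducedStepMatrix n) := by
  unfold minorSum
  refine sum_congr rfl fun s _ => ?_
  refine det_eq_of_forall_row_eq_smul_add_pred (fun _ => 2) (fun j => ?_) (fun i j => ?_)
  · simp [stepMatrix, reducedStepMatrix_zero, stepPoly, coeff_X_pow, Fin.ext_iff]
  · simp only [stepMatrix, submatrix_apply, id, of_apply, Fin.val_succ, reducedStepMatrix_succ,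
      diffMatrix, Fin.val_castSucc]
    rw [stepPoly_succ_sub i.2, coeff_add, coeff_ofNat_mul]

theorem sum_diffMatrix (n : ℕ) (i : Fin n) : ∑ b, diffMatrix n i b = 0 := by
  simp only [diffMatrix, of_apply]
  have h := Finset.sum_range (n := 2 * n + 1)
    (fun b => ((1 - X) * ((1 + 2 * X) * stepPoly (n - 1) i)).coeff b)
  rw [← h, sum_range_coeff_one_sub_X_mul]
  apply coeff_eq_zero_of_natDegree_lt
  have h1 := natDegree_stepPoly_le (n - 1) i (by omega)
  have h2 : (1 + 2 * X : ℚ[X]).natDegree ≤ 1 := by compute_degree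
  have h3 := natDegree_mul_le (p := (1 + 2 * X : ℚ[X])) (q := stepPoly (n - 1) i)
  have := i.2
  omega

theorem coeff_two_mul_add_two (n : ℕ) (j : Fin (n + 1)) :
    ((1 + X) * ((1 + 2 * X) * stepPoly n j)).coeff (2 * (n + 1)) = if j = 0 then 2 else 0 := by
  rw [← mul_assoc]
  split_ifs with h
  · subst h
    rw [show ((1 + X) * (1 + 2 * X) : ℚ[X]) * stepPoly n (0 : Fin (n + 1)) =
        (1 + 3 * X + 2 * X ^ 2) * X ^ (2 * n) by simp [stepPoly]; ring,
      show 2 * (n + 1) = 2 + 2 * n by ring, coeff_mul_X_pow]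
    simp only [coeff_add, coeff_ofNat_mul, coeff_X_pow, coeff_X, coeff_one]
    norm_num
  · apply coeff_eq_zero_of_natDegree_lt
    have h1 := natDegree_stepPoly_le n j (by omega)
    have h2 : ((1 + X) * (1 + 2 * X) : ℚ[X]).natDegree ≤ 2 := by compute_degree
    have h3 := natDegree_mul_le (p := ((1 + X) * (1 + 2 * X) : ℚ[X])) (q := stepPoly n j)
    have : (j : ℕ) ≠ 0 := fun h' => h (Fin.ext h')
    have := j.2
    omega

theorem minorSum_stepMatrix_even (r : ℕ) :
    minorSum (stepMatrix (2 * r)) = minorSum (diffMatrix (2 * r)) := by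
  rw [minorSum_stepMatrix, minorSum_odd, Fin.sum_univ_succ]
  simp only [reducedStepMatrix_zero, reducedStepMatrix_succ, sum_diffMatrix]
  simp
  congr 1

theorem minorSum_stepMatrix_odd (r : ℕ) : minorSum (stepMatrix (2 * r + 1)) =
    -2 * minorSum ((diffMatrix (2 * r + 1)).submatrix Fin.succ id) := by
  rw [minorSum_stepMatrix, minorSum_even, Fin.sum_univ_succ]
  have h : ∀ j : Fin (2 * r + 1), (reducedStepMatrix (2 * r + 1) *
      sgnMatrix ℚ (2 * (2 * r + 1) + 1) *
      (reducedStepMatrix (2 * r + 1))ᵀ) 0 j.succ = if j = 0 then -2 else 0 := by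
    intro j
    rw [Matrix.mul_assoc, mul_apply]
    have := sgnMatrix_mul_diffMatrix (2 * r + 1) (Fin.last _) j
    simp only [reducedStepMatrix_zero, ite_mul, one_mul, zero_mul,
      sum_ite_eq', mem_univ, if_true, Fin.val_last, Nat.add_sub_cancel,
      coeff_two_mul_add_two] at this ⊢
    rw [apply_ite Neg.neg, neg_zero] at this
    exact this
  rw [h 0, sum_eq_zero fun j _ => by rw [h j.succ, if_neg (Fin.succ_ne_zero j), mul_zero, zero_mul]]
  rw [Fin.val_zero, pow_zero, one_mul, if_pos rfl, add_zero]
  rfl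

theorem minorSum_stepMatrix_sq (n : ℕ) : minorSum (stepMatrix n) ^ 2 =
    (∏ i ∈ range (n + 1), (Nat.factorial (3 * i + 1) : ℚ) / Nat.factorial (n + 1 + i)) ^ 2 := by
  obtain ⟨r, rfl | rfl⟩ := Nat.even_or_odd' n
  · rw [minorSum_stepMatrix_even, minorSum_sq, ← prod_condFactor_zero,
      det_scaled_condEntry r 0 fun a b => by simpa using gram_diffMatrix (2 * r) a b]
    simp [binomConv_one_one_even]
  · rw [minorSum_stepMatrix_odd, mul_pow, minorSum_sq, ← prod_condFactor_one,
      det_scaled_condEntry r 1 fun a b => by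
        have := gram_diffMatrix (2 * r + 1) a.succ b.succ
        simp only [Fin.val_succ, Nat.cast_add, Nat.cast_one] at this
        rw [add_comm 1 (a : ℕ), add_comm 1 (b : ℕ), Nat.cast_one, add_comm 1 (a : ℚ),
          add_comm 1 (b : ℚ)]
        exact this]
    have e : (1 : ℚ) + (1 : ℕ) = 2 := by norm_num
    rw [e, binomConv_two_two_even]
    have e' : ∀ k : ℕ, 2 * (k + 1) + 2 = 2 * k + 4 := fun k => by ring
    simp only [e', Nat.cast_one, add_assoc, Nat.reduceAdd]
    push_cast
    ring

end GramMatrix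

section Histories

/-- One time step of the particle system: the particles in `e` move one site to the right. -/
def moveParticles (O e : Finset ℕ) : Finset ℕ := (O \ e) ∪ e.image (· + 1)

/-- A set `e` of particles that may move at time `j` without collisions. -/
def ValidMove (j : ℕ) (O e : Finset ℕ) : Prop :=
  e ⊆ O ∧ (∀ x ∈ e, x ≤ 2 * j) ∧ Disjoint (O \ e) (e.image (· + 1))

/-- The particle configuration after `k` steps of the history `e`. -/
def configAt (O : Finset ℕ) (e : ℕ → Finset ℕ) : ℕ → Finset ℕ
  | 0 => O
  | k + 1 => moveParticles (configAt O e k) (e k)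

/-- Histories with `r` steps, starting from the configuration `O` at time `j`. -/
def histories (r j : ℕ) (O : Finset ℕ) : Set (ℕ → Finset ℕ) :=
  {e | (∀ k < r, ValidMove (j + k) (configAt O e k) (e k)) ∧ ∀ k, r ≤ k → e k = ∅}

theorem configAt_shift (O : Finset ℕ) (e : ℕ → Finset ℕ) (k : ℕ) :
    configAt (moveParticles O (e 0)) (fun i => e (i + 1)) k = configAt O e (k + 1) := by
  induction k with
  | zero => rfl
  | succ k ih => rw [configAt, ih, ← configAt]

/-- A history with at least one step is a first move followed by a shorter history. -/
def historiesSuccEquiv (r j : ℕ) (O : Finset ℕ) : histories (r + 1) j O ≃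
    Σ e : {e // ValidMove j O e}, histories r (j + 1) (moveParticles O e) where
  toFun e := ⟨⟨e.1 0, by simpa [configAt] using e.2.1 0 (by omega)⟩, fun i => e.1 (i + 1), by
    refine ⟨fun k hk => ?_, fun k hk => e.2.2 _ (by omega)⟩
    have := e.2.1 (k + 1) (by omega)
    rw [configAt_shift, show j + 1 + k = j + (k + 1) by omega]
    exact this⟩
  invFun p := ⟨fun k => Nat.casesOn k p.1.1 p.2.1, by
    refine ⟨fun k hk => ?_, fun k hk => ?_⟩
    · cases k with
      | zero => simpa [configAt] using p.1.2
      | succ k =>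
        have := p.2.2.1 k (by omega)
        rw [← configAt_shift, show j + (k + 1) = j + 1 + k by omega]
        exact this
    · cases k with
      | zero => omega
      | succ k => exact p.2.2.2 k (by omega)⟩
  left_inv e := by
    ext k : 2
    cases k <;> rfl
  right_inv p := rfl

theorem histories_zero (j : ℕ) (O : Finset ℕ) : histories 0 j O = {fun _ => ∅} := by
  ext e
  simp [histories, funext_iff]

theorem finite_validMove (j : ℕ) (O : Finset ℕ) : Finite {e // ValidMove j O e} :=
  ((O.powerset.finite_toSet).subset (t := {e | ValidMove j O e})
    fun e he => by simpa using he.1).to_subtype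

theorem finite_histories (r : ℕ) : ∀ (j : ℕ) (O : Finset ℕ), Finite (histories r j O) := by
  induction r with
  | zero => intro j O; rw [histories_zero]; infer_instance
  | succ r ih =>
    intro j O
    have := finite_validMove j O
    have (e : {e // ValidMove j O e}) := ih (j + 1) (moveParticles O e)
    exact Finite.of_equiv _ (historiesSuccEquiv r j O).symm

open scoped Classical in
theorem card_histories_succ (r j : ℕ) (O : Finset ℕ) : Nat.card (histories (r + 1) j O) =
    ∑ e ∈ O.powerset with ValidMove j O e, Nat.card (histories r (j + 1) (moveParticles O e)) := by
  have := finite_validMove j O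
  have := Fintype.ofFinite {e // ValidMove j O e}
  have (e : {e // ValidMove j O e}) := finite_histories r (j + 1) (moveParticles O e)
  rw [Nat.card_congr (historiesSuccEquiv r j O), Nat.card_sigma]
  symm
  refine Finset.sum_subtype _ (fun e => ?_) _
  simp only [mem_filter, mem_powerset, and_iff_right_iff_imp]
  exact fun h => h.1

open Matrix Polynomial

/-- The matrix whose sorted minors count the histories from the configuration `o` at time `j`. -/
noncomputable def configMatrix (n j : ℕ) (o : Fin (n + 1) → ℕ) :
    Matrix (Fin (n + 1)) (Fin (2 * n + 1)) ℚ :=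
  of fun i a => (X ^ o i * (1 + X) ^ (n - max (i : ℕ) j) : ℚ[X]).coeff a

theorem minorSum_add {R : Type*} [CommRing R] {m M : ℕ} (v w : Matrix (Fin m) (Fin M) R) :
    minorSum (v + w) =
      ∑ s : Finset (Fin m), minorSum (of fun i a => if i ∈ s then v i a else w i a) := by
  unfold minorSum
  rw [sum_comm]
  refine sum_congr rfl fun c _ => ?_
  have := (detRowAlternating (R := R) (n := Fin m)).toMultilinearMap.map_add_univ
    (fun i k => v i (c k)) (fun i k => w i (c k))
  refine this.trans (sum_congr rfl fun s _ => ?_)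
  change det _ = det _
  congr 1
  ext i k
  by_cases h : i ∈ s <;> simp [h]

theorem minorSum_configMatrix_last {n : ℕ} {o : Fin (n + 1) → ℕ} (ho : StrictMono o)
    (h : ∀ i, o i ≤ 2 * n) : minorSum (configMatrix n n o) = 1 := by
  classical
  unfold minorSum
  let s₀ : Fin (n + 1) → Fin (2 * n + 1) := fun i => ⟨o i, by have := h i; omega⟩
  have hs₀ : StrictMono s₀ := fun a b hab => ho hab
  have hentry : ∀ i a, configMatrix n n o i a = if s₀ i = a then 1 else 0 := by
    intro i a
    have : n - max (i : ℕ) n = 0 := by omega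
    simp only [configMatrix, of_apply, this, pow_zero, mul_one, coeff_X_pow, s₀, Fin.ext_iff]
    simp only [eq_comm]
  rw [sum_eq_single s₀]
  · have : (configMatrix n n o).submatrix id s₀ = 1 := by
      ext i k
      simp [hentry, hs₀.injective.eq_iff, Matrix.one_apply]
    rw [this, det_one]
  · intro s hs hne
    simp only [mem_filter, mem_univ, true_and] at hs
    obtain ⟨i, hi⟩ : ∃ i, s₀ i ∉ Set.range s := by
      by_contra! hcon
      apply hne
      have : univ.image s₀ ⊆ univ.image s := by
        intro a ha
        obtain ⟨i, -, rfl⟩ := mem_image.1 ha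
        obtain ⟨k, hk⟩ := hcon i
        exact mem_image.2 ⟨k, mem_univ _, hk⟩
      have hc := eq_of_subset_of_card_le this (by
        rw [card_image_of_injective _ hs.injective, card_image_of_injective _ hs₀.injective])
      apply (StrictMono.range_inj hs hs₀).1
      have := congrArg (fun t : Finset _ => (t : Set (Fin (2 * n + 1)))) hc
      simpa using this.symm
    apply det_eq_zero_of_row_eq_zero i
    intro k
    simp only [submatrix_apply, id, hentry, ite_eq_right_iff]
    intro hk
    exact absurd ⟨k, hk.symm⟩ hi
  · simp [hs₀]

end Histories

section Histories
open Matrix Polynomial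

theorem configMatrix_eq_add {n j : ℕ} (hj : j < n) (o : Fin (n + 1) → ℕ) :
    configMatrix n j o = (of fun (i : Fin (n + 1)) a => if (i : ℕ) ≤ j then
      configMatrix n (j + 1) (fun i => o i + 1) i a else 0) + configMatrix n (j + 1) o := by
  ext i a
  simp only [configMatrix, of_apply, Matrix.add_apply]
  split_ifs with h
  · rw [← coeff_add, max_eq_right h, max_eq_right (by omega),
      show n - j = n - (j + 1) + 1 by omega]
    congr 1
    ring
  · rw [zero_add, max_eq_left (by omega), max_eq_left (by omega)]

/-- The positions of the particles after those with index in `s` have moved. -/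
def moveOn {n : ℕ} (o : Fin (n + 1) → ℕ) (s : Finset (Fin (n + 1))) (i : Fin (n + 1)) : ℕ :=
  o i + if i ∈ s then 1 else 0

theorem minorSum_piecewise_of_le {n j : ℕ} (o : Fin (n + 1) → ℕ) {s : Finset (Fin (n + 1))}
    (hs : ∀ i ∈ s, (i : ℕ) ≤ j) :
    minorSum (of fun i a => if i ∈ s then (of fun (i : Fin (n + 1)) a => if (i : ℕ) ≤ j then
      configMatrix n (j + 1) (fun i => o i + 1) i a else 0) i a else configMatrix n (j + 1) o i a) =
      minorSum (configMatrix n (j + 1) (moveOn o s)) := by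
  congr 1
  ext i a
  by_cases h : i ∈ s
  · simp [h, hs i h, configMatrix, moveOn]
  · simp [h, configMatrix, moveOn]

theorem minorSum_eq_zero_of_row_zero {R : Type*} [CommRing R] {m M : ℕ}
    {F : Matrix (Fin m) (Fin M) R} (i : Fin m) (h : ∀ a, F i a = 0) : minorSum F = 0 :=
  sum_eq_zero fun s _ => det_eq_zero_of_row_eq_zero i fun k => h (s k)

theorem minorSum_eq_zero_of_row_eq {R : Type*} [CommRing R] {m M : ℕ}
    {F : Matrix (Fin m) (Fin M) R} {i j : Fin m} (hij : i ≠ j) (h : F i = F j) :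
    minorSum F = 0 :=
  sum_eq_zero fun s _ => det_zero_of_row_eq hij (funext fun k => congrFun h (s k))

theorem strictMono_moveOn {n : ℕ} {o : Fin (n + 1) → ℕ} (ho : StrictMono o)
    {s : Finset (Fin (n + 1))} (h : Function.Injective (moveOn o s)) :
    StrictMono (moveOn o s) := by
  refine Monotone.strictMono_of_injective (fun a b hab => ?_) h
  rcases hab.eq_or_lt with rfl | hab
  · rfl
  · have := ho hab
    unfold moveOn
    split_ifs <;> omega

theorem minorSum_configMatrix_of_not_injective {n j : ℕ} {o : Fin (n + 1) → ℕ}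
    (h1 : ∀ i : Fin (n + 1), j < i → o i = 2 * i)
    (h2 : ∀ i : Fin (n + 1), (i : ℕ) ≤ j → o i ≤ 2 * j) {s : Finset (Fin (n + 1))}
    (hs : ∀ i ∈ s, (i : ℕ) ≤ j) (h : ¬Function.Injective (moveOn o s)) :
    minorSum (configMatrix n (j + 1) (moveOn o s)) = 0 := by
  obtain ⟨a, b, hab, hne⟩ : ∃ a b, moveOn o s a = moveOn o s b ∧ a ≠ b := by
    simpa [Function.Injective] using h
  apply minorSum_eq_zero_of_row_eq hne
  have hmax : max (a : ℕ) (j + 1) = max (b : ℕ) (j + 1) := by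
    have hne' : (a : ℕ) ≠ b := fun h => hne (Fin.ext h)
    have a1 := h1 a
    have a2 := h2 a
    have b1 := h1 b
    have b2 := h2 b
    have a3 := hs a
    have b3 := hs b
    unfold moveOn at hab
    split_ifs at hab <;> grind
  ext c
  simp only [configMatrix, of_apply, hab, hmax]

theorem moveParticles_image {n : ℕ} {o : Fin (n + 1) → ℕ} (ho : StrictMono o)
    (s : Finset (Fin (n + 1))) :
    moveParticles (univ.image o) (s.image o) = univ.image (moveOn o s) := by
  ext x
  simp only [moveParticles, mem_union, mem_sdiff, mem_image, mem_univ, true_and]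
  constructor
  · rintro (⟨⟨i, rfl⟩, hi⟩ | ⟨_, ⟨i, hi, rfl⟩, rfl⟩)
    · refine ⟨i, ?_⟩
      have : i ∉ s := fun h => hi ⟨i, h, rfl⟩
      simp [moveOn, this]
    · exact ⟨i, by simp [moveOn, hi]⟩
  · rintro ⟨i, rfl⟩
    by_cases hi : i ∈ s
    · exact Or.inr ⟨o i, ⟨i, hi, rfl⟩, by simp [moveOn, hi]⟩
    · left
      refine ⟨⟨i, by simp [moveOn, hi]⟩, ?_⟩
      rintro ⟨k, hk, hki⟩
      simp only [moveOn, hi, if_false, add_zero] at hki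
      exact hi (ho.injective hki ▸ hk)

theorem validMove_image_iff {n j : ℕ} {o : Fin (n + 1) → ℕ} (ho : StrictMono o)
    (h1 : ∀ i : Fin (n + 1), j < i → o i = 2 * i)
    (h2 : ∀ i : Fin (n + 1), (i : ℕ) ≤ j → o i ≤ 2 * j) (s : Finset (Fin (n + 1))) :
    ValidMove j (univ.image o) (s.image o) ↔
      (∀ i ∈ s, (i : ℕ) ≤ j) ∧ Function.Injective (moveOn o s) := by
  have hle : ∀ i : Fin (n + 1), o i ≤ 2 * j ↔ (i : ℕ) ≤ j := by
    intro i
    refine ⟨fun h => ?_, h2 i⟩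
    by_contra hcon
    have := h1 i (by omega)
    omega
  have hmem : ∀ i, o i ∈ s.image o ↔ i ∈ s := fun i => by
    simp [ho.injective.eq_iff]
  constructor
  · rintro ⟨-, h, hd⟩
    refine ⟨fun i hi => (hle i).1 (h _ (mem_image_of_mem _ hi)), ?_⟩
    have key : ∀ a b, a ∈ s → b ∉ s → o a + 1 ≠ o b := by
      intro a b ha hb hab
      refine (Finset.disjoint_left.1 hd) (a := o b) ?_ ?_
      · simpa [ho.injective.eq_iff] using hb
      · exact mem_image.2 ⟨o a, mem_image_of_mem _ ha, hab⟩
    intro a b hab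
    by_cases ha : a ∈ s <;> by_cases hb : b ∈ s <;> simp only [moveOn, ha, hb, if_true, if_false] at hab
    · exact ho.injective (by omega)
    · exact absurd hab (key a b ha hb)
    · exact absurd hab.symm (key b a hb ha)
    · exact ho.injective hab
  · rintro ⟨h, hinj⟩
    refine ⟨image_subset_image (subset_univ _), ?_, ?_⟩
    · intro x hx
      obtain ⟨i, hi, rfl⟩ := mem_image.1 hx
      exact h2 i (h i hi)
    · rw [Finset.disjoint_left]
      intro x hx hx'
      simp only [mem_sdiff, mem_image, mem_univ, true_and] at hx hx'
      obtain ⟨⟨b, rfl⟩, hb⟩ := hx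
      obtain ⟨_, ⟨a, ha, rfl⟩, hab⟩ := hx'
      have hb' : b ∉ s := fun h => hb ⟨b, h, rfl⟩
      have : a = b := hinj (by simp [moveOn, ha, hb', hab])
      exact hb' (this ▸ ha)

theorem card_histories_eq_minorSum {n : ℕ} (r : ℕ) : ∀ (j : ℕ) (o : Fin (n + 1) → ℕ), j + r = n →
    StrictMono o → (∀ i : Fin (n + 1), j < i → o i = 2 * i) →
    (∀ i : Fin (n + 1), (i : ℕ) ≤ j → o i ≤ 2 * j) →
    (Nat.card (histories r j (univ.image o)) : ℚ) = minorSum (configMatrix n j o) := by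
  classical
  induction r with
  | zero =>
    intro j o hj ho _ h2
    obtain rfl : j = n := hj
    rw [histories_zero, minorSum_configMatrix_last ho fun i => h2 i (by omega)]
    simp
  | succ r ih =>
    intro j o hj ho h1 h2
    rw [card_histories_succ, configMatrix_eq_add (by omega), minorSum_add]
    let good : Finset (Finset (Fin (n + 1))) :=
      {s | (∀ i ∈ s, (i : ℕ) ≤ j) ∧ Function.Injective (moveOn o s)}
    rw [← sum_subset (subset_univ good)]
    · push_cast
      symm
      refine sum_bij (fun s _ => s.image o) ?_ ?_ ?_ ?_
      · intro s hs
        simp only [good, mem_filter, mem_univ, true_and] at hs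
        simp only [mem_filter, mem_powerset]
        exact ⟨image_subset_image (subset_univ _), (validMove_image_iff ho h1 h2 s).2 hs⟩
      · intro s _ t _ hst
        exact image_injective ho.injective hst
      · intro e he
        simp only [mem_filter, mem_powerset] at he
        obtain ⟨s, -, rfl⟩ := subset_image_iff.1 he.1
        refine ⟨s, ?_, rfl⟩
        simp only [good, mem_filter, mem_univ, true_and]
        exact (validMove_image_iff ho h1 h2 s).1 he.2
      · intro s hs
        simp only [good, mem_filter, mem_univ, true_and] at hs
        rw [minorSum_piecewise_of_le o hs.1, moveParticles_image ho,
          ih (j + 1) (moveOn o s) (by omega) (strictMono_moveOn ho hs.2)]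
        · intro i hi
          have : i ∉ s := fun h => by have := hs.1 i h; omega
          simp [moveOn, this, h1 i (by omega)]
        · intro i hi
          have e1 := h1 i
          have e2 := h2 i
          have e3 := hs.1 i
          unfold moveOn
          split_ifs <;> grind
    · intro s _ hs
      simp only [good, mem_filter, mem_univ, true_and, not_and_or] at hs
      by_cases hle : ∀ i ∈ s, (i : ℕ) ≤ j
      · rw [minorSum_piecewise_of_le o hle]
        exact minorSum_configMatrix_of_not_injective h1 h2 hle
          (hs.resolve_left (not_not.2 hle))
      · push Not at hle
        obtain ⟨i, hi, hij⟩ := hle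
        apply minorSum_eq_zero_of_row_zero i
        intro a
        simp [hi, not_le.2 hij]

theorem card_histories_sq (n : ℕ) :
    (Nat.card (histories n 0 (univ.image fun i : Fin (n + 1) => 2 * (i : ℕ))) : ℚ) ^ 2 =
      minorSum (stepMatrix n) ^ 2 := by
  rw [card_histories_eq_minorSum n 0 (fun i : Fin (n + 1) => 2 * (i : ℕ)) (by omega)
    (fun a b h => by simpa using h) (fun i _ => rfl) (fun i h => by simpa using h)]
  have : configMatrix n 0 (fun i : Fin (n + 1) => 2 * (i : ℕ)) =
      (stepMatrix n).submatrix Fin.revPerm id := by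
    ext i a
    simp only [configMatrix, stepMatrix, submatrix_apply, of_apply, Fin.revPerm_apply, id,
      stepPoly, Fin.val_rev]
    congr 3
    · omega
    · omega
  rw [this, minorSum_permute, mul_pow]
  have h : ((Equiv.Perm.sign (Fin.revPerm : Equiv.Perm (Fin (n + 1))) : ℤ) : ℚ) ^ 2 = 1 := by
    rcases Int.units_eq_one_or (Equiv.Perm.sign (Fin.revPerm : Equiv.Perm (Fin (n + 1)))) with h | h <;>
      rw [h] <;> norm_num
  rw [h, one_mul]

theorem card_histories_eq (n : ℕ) :
    (Nat.card (histories n 0 (univ.image fun i : Fin (n + 1) => 2 * (i : ℕ))) : ℚ) =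
      ∏ i ∈ range (n + 1), (Nat.factorial (3 * i + 1) : ℚ) / Nat.factorial (n + 1 + i) := by
  have h := (card_histories_sq n).trans (minorSum_stepMatrix_sq n)
  exact (sq_eq_sq₀ (by positivity) (prod_nonneg fun i _ => by positivity)).1 h

end Histories

section Strips

/-- The vertex in column `x` of the lower boundary of strip `j` exists. -/
def IsOddVertex (n j x : ℕ) : Prop := j ≤ n ∧ x ≤ 2 * j ∧ ¬(n % 2 = 1 ∧ x = 2 * n)

/-- A perfect matching in strip coordinates: `H`, `D`, `U` tell which of its three edges covers an
odd vertex, and `G` which diagonal edges are used. -/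
structure StripMatching (n : ℕ) (H D U : ℕ → ℕ → Prop) (G : ℕ → Prop) : Prop where
  supp_H : ∀ {j x}, H j x → j ≤ n ∧ x ≤ 2 * j ∧ x < 2 * n
  supp_D : ∀ {j x}, D j x → IsOddVertex n j x
  supp_U : ∀ {j x}, U j x → j ≤ n ∧ x < 2 * j
  supp_G : ∀ {x}, G x → x < 2 * n
  cover_odd : ∀ {j x}, IsOddVertex n j x → H j x ∨ D j x ∨ U j x
  not_H_D : ∀ {j x}, H j x → ¬D j x
  not_H_U : ∀ {j x}, H j x → ¬U j x
  not_D_U : ∀ {j x}, D j x → ¬U j x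
  cover_even : ∀ {j x}, j < n → x ≤ 2 * j + 1 → (∃ y, x = y + 1 ∧ H j y) ∨ D j x ∨ U (j + 1) x
  not_H_D_succ : ∀ {j x}, H j x → ¬D j (x + 1)
  not_H_U_succ : ∀ {j x}, H j x → ¬U (j + 1) (x + 1)
  not_D_U_succ : ∀ {j x}, D j x → ¬U (j + 1) x
  cover_diag : ∀ {x}, x ≤ 2 * n → D n x ∨ G x ∨ ∃ y, x = y + 1 ∧ (H n y ∨ G y)
  not_H_G : ∀ {x}, H n x → ¬G x
  not_H_G_succ : ∀ {x}, H n x → ¬G (x + 1)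
  not_D_G : ∀ {x}, D n x → ¬G x
  not_D_succ_G : ∀ {x}, D n (x + 1) → ¬G x
  not_G_G_succ : ∀ {x}, G x → ¬G (x + 1)

/-- The initial configuration `{0, 2, …, 2n}`. -/
def initialConfig (n : ℕ) : Finset ℕ := univ.image fun i : Fin (n + 1) => 2 * (i : ℕ)

theorem mem_initialConfig {n x : ℕ} : x ∈ initialConfig n ↔ x % 2 = 0 ∧ x ≤ 2 * n := by
  simp only [initialConfig, mem_image, mem_univ, true_and]
  constructor
  · rintro ⟨i, rfl⟩
    omega
  · rintro ⟨h, h'⟩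
    exact ⟨⟨x / 2, by omega⟩, by simp; omega⟩

theorem card_initialConfig (n : ℕ) : (initialConfig n).card = n + 1 := by
  rw [initialConfig, card_image_of_injective]
  · simp
  · intro a b h
    exact Fin.ext (by simpa using h)

theorem mem_moveParticles {O e : Finset ℕ} {x : ℕ} :
    x ∈ moveParticles O e ↔ (x ∈ O ∧ x ∉ e) ∨ ∃ y, x = y + 1 ∧ y ∈ e := by
  simp only [moveParticles, mem_union, mem_sdiff, mem_image, and_comm, eq_comm (a := x)]

theorem ValidMove.succ_mem {j x : ℕ} {O e : Finset ℕ} (h : ValidMove j O e) (hx : x ∈ e)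
    (hO : x + 1 ∈ O) : x + 1 ∈ e := by
  by_contra hcon
  exact Finset.disjoint_left.1 h.2.2 (mem_sdiff.2 ⟨hO, hcon⟩) (mem_image_of_mem _ hx)

theorem ValidMove.card_moveParticles {j : ℕ} {O e : Finset ℕ} (h : ValidMove j O e) :
    (moveParticles O e).card = O.card := by
  rw [moveParticles, card_union_of_disjoint h.2.2,
    card_image_of_injective _ (fun a b h => by simpa using h), card_sdiff_add_card_eq_card h.1]

theorem configAt_initialConfig {n j : ℕ} {e : ℕ → Finset ℕ}
    (he : ∀ k < j, ValidMove k (configAt (initialConfig n) e k) (e k)) :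
    (∀ x, 2 * j ≤ x → (x ∈ configAt (initialConfig n) e j ↔ x % 2 = 0 ∧ x ≤ 2 * n)) ∧
      (configAt (initialConfig n) e j).card = n + 1 := by
  induction j with
  | zero => exact ⟨fun x _ => mem_initialConfig, card_initialConfig n⟩
  | succ j ih =>
    obtain ⟨ih1, ih2⟩ := ih fun k hk => he k (by omega)
    have hv := he j (by omega)
    refine ⟨fun x hx => ?_, by rw [configAt, hv.card_moveParticles, ih2]⟩
    rw [configAt, mem_moveParticles, ← ih1 x (by omega)]
    constructor
    · rintro (h | ⟨y, rfl, hy⟩)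
      · exact h.1
      · have := hv.2.1 y hy
        omega
    · refine fun h => Or.inl ⟨h, fun hx' => ?_⟩
      have := hv.2.1 x hx'
      omega

/-- The parity of the number of empty sites to the left of `x`. -/
def OddHoles (O : Finset ℕ) (x : ℕ) : Prop := (range x \ O).card % 2 = 1

theorem not_oddHoles_zero (O : Finset ℕ) : ¬OddHoles O 0 := by simp [OddHoles]

theorem oddHoles_succ_of_mem {O : Finset ℕ} {x : ℕ} (h : x ∈ O) :
    OddHoles O (x + 1) ↔ OddHoles O x := by
  rw [OddHoles, OddHoles, range_add_one, insert_sdiff_of_mem _ h]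

theorem oddHoles_succ_of_notMem {O : Finset ℕ} {x : ℕ} (h : x ∉ O) :
    OddHoles O (x + 1) ↔ ¬OddHoles O x := by
  rw [OddHoles, OddHoles, range_add_one, insert_sdiff_of_notMem _ h,
    card_insert_of_notMem (by simp)]
  omega

theorem oddHoles_two_mul {n : ℕ} {O : Finset ℕ}
    (h : ∀ x, 2 * n ≤ x → (x ∈ O ↔ x % 2 = 0 ∧ x ≤ 2 * n)) (hO : O.card = n + 1) :
    OddHoles O (2 * n) ↔ n % 2 = 1 := by
  have h1 : O = insert (2 * n) (range (2 * n) ∩ O) := by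
    ext x
    simp only [mem_insert, mem_inter, mem_range]
    have := h x
    constructor
    · intro hx
      by_cases hlt : x < 2 * n
      · exact Or.inr ⟨hlt, hx⟩
      · have := (this (by omega)).1 hx
        omega
    · rintro (rfl | hx)
      · exact (this le_rfl).2 ⟨by omega, le_rfl⟩
      · exact hx.2
  have h2 := congrArg card h1
  rw [card_insert_of_notMem (by simp), hO] at h2
  have h3 := card_sdiff_add_card_inter (range (2 * n)) O
  rw [card_range] at h3
  rw [OddHoles]
  omega

/-- The covering by `H`-edges determined by a history. -/
def histH (n : ℕ) (e : ℕ → Finset ℕ) (j x : ℕ) : Prop :=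
  (j < n ∧ x ∈ e j) ∨ (j = n ∧ x ∈ configAt (initialConfig n) e n ∧ x < 2 * n ∧
    OddHoles (configAt (initialConfig n) e n) x)

/-- The covering by `D`-edges determined by a history. -/
def histD (n : ℕ) (e : ℕ → Finset ℕ) (j x : ℕ) : Prop :=
  (j < n ∧ x ≤ 2 * j ∧ x ∈ configAt (initialConfig n) e j ∧ x ∉ e j) ∨
    (j = n ∧ x ∈ configAt (initialConfig n) e n ∧ x ≤ 2 * n ∧
      ¬OddHoles (configAt (initialConfig n) e n) x)

/-- The covering by `U`-edges determined by a history. -/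
def histU (n : ℕ) (e : ℕ → Finset ℕ) (j x : ℕ) : Prop :=
  j ≤ n ∧ x < 2 * j ∧ x ∉ configAt (initialConfig n) e j

/-- The diagonal edges determined by a history. -/
def histG (n : ℕ) (e : ℕ → Finset ℕ) (x : ℕ) : Prop :=
  x ∉ configAt (initialConfig n) e n ∧ x < 2 * n ∧ ¬OddHoles (configAt (initialConfig n) e n) x

theorem stripMatching_of_history {n : ℕ} {e : ℕ → Finset ℕ}
    (he : e ∈ histories n 0 (initialConfig n)) :
    StripMatching n (histH n e) (histD n e) (histU n e) (histG n e) := by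
  have hv : ∀ k < n, ValidMove k (configAt (initialConfig n) e k) (e k) := by
    simpa using he.1
  have hO : ∀ j ≤ n, ∀ x, 2 * j ≤ x →
      (x ∈ configAt (initialConfig n) e j ↔ x % 2 = 0 ∧ x ≤ 2 * n) :=
    fun j hj => (configAt_initialConfig fun k hk => hv k (by omega)).1
  have hp := oddHoles_two_mul (hO n le_rfl) (configAt_initialConfig hv).2
  have hp0 := not_oddHoles_zero (configAt (initialConfig n) e n)
  have hp1 := fun x => @oddHoles_succ_of_mem (configAt (initialConfig n) e n) x
  have hp2 := fun x => @oddHoles_succ_of_notMem (configAt (initialConfig n) e n) x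
  have hlast : 2 * n ∈ configAt (initialConfig n) e n :=
    (hO n le_rfl _ le_rfl).2 ⟨by omega, le_rfl⟩
  have hmem : ∀ j < n, ∀ x ∈ e j, x ∈ configAt (initialConfig n) e j := fun j hj x hx =>
    (hv j hj).1 hx
  have hle : ∀ j < n, ∀ x ∈ e j, x ≤ 2 * j := fun j hj x hx => (hv j hj).2.1 x hx
  have hcol : ∀ j < n, ∀ x ∈ e j, x + 1 ∈ configAt (initialConfig n) e j → x + 1 ∈ e j :=
    fun j hj x hx => (hv j hj).succ_mem hx
  have hsucc : ∀ j x, x ∈ configAt (initialConfig n) e (j + 1) ↔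
      (x ∈ configAt (initialConfig n) e j ∧ x ∉ e j) ∨ ∃ y, x = y + 1 ∧ y ∈ e j :=
    fun j x => mem_moveParticles
  unfold histH histD histU histG
  generalize configAt (initialConfig n) e = O at *
  constructor
  · rintro j x (⟨h, h'⟩ | ⟨rfl, h⟩)
    · have := hle j h x h'
      omega
    · omega
  · rintro j x (⟨h, h'⟩ | ⟨rfl, h⟩)
    · exact ⟨by omega, by omega, by omega⟩
    · refine ⟨by omega, by omega, ?_⟩
      rintro ⟨h1, rfl⟩
      exact h.2.2 (hp.2 h1)
  · omega
  · omega
  · rintro j x ⟨h1, h2, h3⟩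
    by_cases hx : x ∈ O j
    · rcases h1.eq_or_lt with rfl | h1
      · by_cases h : OddHoles (O j) x
        · refine Or.inl (Or.inr ⟨rfl, hx, ?_, h⟩)
          rcases h2.eq_or_lt with rfl | h2
          · exact absurd ⟨hp.1 h, rfl⟩ h3
          · exact h2
        · exact Or.inr (Or.inl (Or.inr ⟨rfl, hx, h2, h⟩))
      · tauto
    · refine Or.inr (Or.inr ⟨h1, ?_, hx⟩)
      by_contra hcon
      apply hx
      rw [hO j h1 x (by omega)]
      omega
  · rintro j x (⟨h, h'⟩ | ⟨rfl, h⟩) (⟨g, g'⟩ | ⟨g1, g⟩)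
    · tauto
    · omega
    · omega
    · tauto
  · rintro j x (⟨h, h'⟩ | ⟨rfl, h⟩) ⟨g1, g2, g3⟩
    · exact g3 (hmem j h x h')
    · tauto
  · rintro j x (⟨h, h'⟩ | ⟨rfl, h⟩) ⟨g1, g2, g3⟩
    · tauto
    · tauto
  · intro j x hj hx
    by_cases h : x ∈ O (j + 1)
    · rcases (hsucc j x).1 h with h | ⟨y, rfl, hy⟩
      · refine Or.inr (Or.inl (Or.inl ⟨hj, ?_, h⟩))
        by_contra hcon
        have := (hO j hj.le x (by omega)).1 h.1
        omega
      · exact Or.inl ⟨y, rfl, Or.inl ⟨hj, hy⟩⟩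
    · exact Or.inr (Or.inr ⟨by omega, by omega, h⟩)
  · rintro j x (⟨h, h'⟩ | ⟨rfl, h⟩) (⟨g, g'⟩ | ⟨g1, g⟩)
    · exact g'.2.2 (hcol j h x h' g'.2.1)
    · omega
    · omega
    · exact g.2.2 ((hp1 x h.1).2 h.2.2)
  · rintro j x (⟨h, h'⟩ | ⟨rfl, h⟩) ⟨g1, g2, g3⟩
    · exact g3 ((hsucc _ _).2 (Or.inr ⟨x, rfl, h'⟩))
    · omega
  · rintro j x (⟨h, h'⟩ | ⟨rfl, h⟩) ⟨g1, g2, g3⟩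
    · exact g3 ((hsucc _ _).2 (Or.inl h'.2))
    · omega
  · intro x hx
    by_cases h : OddHoles (O n) x
    · cases x with
      | zero => exact absurd h hp0
      | succ y =>
        refine Or.inr (Or.inr ⟨y, rfl, ?_⟩)
        by_cases hy : y ∈ O n
        · exact Or.inl (Or.inr ⟨rfl, hy, by omega, (hp1 y hy).1 h⟩)
        · exact Or.inr ⟨hy, by omega, (hp2 y hy).1 h⟩
    · by_cases hx' : x ∈ O n
      · exact Or.inl (Or.inr ⟨rfl, hx', hx, h⟩)
      · refine Or.inr (Or.inl ⟨hx', ?_, h⟩)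
        rcases hx.eq_or_lt with rfl | hx
        · exact absurd hlast hx'
        · exact hx
  · rintro x (⟨h, h'⟩ | ⟨-, h⟩) g
    · omega
    · tauto
  · rintro x (⟨h, h'⟩ | ⟨-, h⟩) g
    · omega
    · exact g.2.2 ((hp1 x h.1).2 h.2.2)
  · rintro x (⟨h, h'⟩ | ⟨-, h⟩) g
    · omega
    · tauto
  · rintro x (⟨h, h'⟩ | ⟨-, h⟩) g
    · omega
    · exact h.2.2 ((hp2 x g.1).2 g.2.2)
  · rintro x h g
    exact g.2.2 ((hp2 x h.1).2 h.2.2)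

end Strips

section Strips

open scoped Classical in
/-- The history read off from the `H`-edges of a perfect matching. -/
noncomputable def movesOf (n : ℕ) (H : ℕ → ℕ → Prop) (j : ℕ) : Finset ℕ :=
  {x ∈ range (2 * j + 1) | j < n ∧ H j x}

theorem mem_movesOf {n : ℕ} {H : ℕ → ℕ → Prop} {j x : ℕ} :
    x ∈ movesOf n H j ↔ x ≤ 2 * j ∧ j < n ∧ H j x := by
  simp [movesOf]

theorem movesOf_histH {n : ℕ} {e : ℕ → Finset ℕ} (he : e ∈ histories n 0 (initialConfig n)) :
    movesOf n (histH n e) = e := by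
  ext j x
  rw [mem_movesOf, histH]
  constructor
  · rintro ⟨-, h, h' | h'⟩
    · exact h'.2
    · omega
  · intro hx
    have hj : j < n := by
      by_contra hj
      rw [he.2 j (by omega)] at hx
      simp at hx
    have := (he.1 j hj).2.1 x hx
    exact ⟨by omega, hj, Or.inl ⟨hj, hx⟩⟩

variable {n : ℕ} {H D U : ℕ → ℕ → Prop} {G : ℕ → Prop}

theorem StripMatching.validMove (h : StripMatching n H D U G) (j : ℕ) (hj : j ≤ n) :
    (∀ k < j, ValidMove k (configAt (initialConfig n) (movesOf n H) k) (movesOf n H k)) ∧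
      ∀ x < 2 * j, (U j x ↔ x ∉ configAt (initialConfig n) (movesOf n H) j) := by
  induction j with
  | zero => simp
  | succ j ih =>
    obtain ⟨ih1, ih2⟩ := ih (by omega)
    have hO := (configAt_initialConfig ih1).1
    have hmem : ∀ x ≤ 2 * j,
        (x ∈ configAt (initialConfig n) (movesOf n H) j ↔ H j x ∨ D j x) := by
      intro x hx
      have h1 := h.cover_odd (j := j) (x := x) ⟨by omega, hx, by omega⟩
      have h2 := h.not_H_U (j := j) (x := x)
      have h3 := h.not_D_U (j := j) (x := x)
      rcases hx.eq_or_lt with rfl | hx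
      · have h4 : ¬U j (2 * j) := fun h' => by have := h.supp_U h'; omega
        have h5 := (hO (2 * j) le_rfl).2 ⟨by omega, by omega⟩
        tauto
      · have := ih2 x hx
        tauto
    have hv : ValidMove j (configAt (initialConfig n) (movesOf n H) j) (movesOf n H j) := by
      refine ⟨fun x hx => ?_, fun x hx => (mem_movesOf.1 hx).1, ?_⟩
      · rw [mem_movesOf] at hx
        exact (hmem x hx.1).2 (Or.inl hx.2.2)
      · rw [Finset.disjoint_left]
        intro x hx hx'
        rw [mem_sdiff, mem_movesOf] at hx
        simp only [mem_image, mem_movesOf] at hx'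
        obtain ⟨y, ⟨hy, -, hH⟩, rfl⟩ := hx'
        by_cases hle : y + 1 ≤ 2 * j
        · rcases (hmem _ hle).1 hx.1 with h' | h'
          · exact hx.2 ⟨hle, by omega, h'⟩
          · exact h.not_H_D_succ hH h'
        · have := (hO _ (by omega)).1 hx.1
          omega
    refine ⟨fun k hk => ?_, fun x hx => ?_⟩
    · rcases (Nat.lt_succ_iff.1 hk).eq_or_lt with rfl | hk
      · exact hv
      · exact ih1 k hk
    · rw [configAt, mem_moveParticles]
      constructor
      · rintro hU (⟨h1, h2⟩ | ⟨y, rfl, hy⟩)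
        · by_cases hle : x ≤ 2 * j
          · rcases (hmem x hle).1 h1 with h' | h'
            · exact h2 (mem_movesOf.2 ⟨hle, by omega, h'⟩)
            · exact h.not_D_U_succ h' hU
          · have := (hO x (by omega)).1 h1
            omega
        · exact h.not_H_U_succ (mem_movesOf.1 hy).2.2 hU
      · intro hx'
        rcases h.cover_even (j := j) (x := x) (by omega) (by omega) with ⟨y, rfl, hy⟩ | hD | hU
        · exact absurd (Or.inr ⟨y, rfl, mem_movesOf.2 ⟨(h.supp_H hy).2.1, by omega, hy⟩⟩) hx'
        · have hle := (h.supp_D hD).2.1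
          refine absurd (Or.inl ⟨(hmem x hle).2 (Or.inr hD), fun hm => ?_⟩) hx'
          exact h.not_H_D (mem_movesOf.1 hm).2.2 hD
        · exact hU

theorem StripMatching.movesOf_mem_histories (h : StripMatching n H D U G) :
    movesOf n H ∈ histories n 0 (initialConfig n) := by
  refine ⟨fun k hk => ?_, fun k hk => ?_⟩
  · rw [zero_add]
    exact (h.validMove n le_rfl).1 k hk
  · ext x
    rw [mem_movesOf]
    simp
    omega

theorem StripMatching.oddHoles_iff (h : StripMatching n H D U G) (x : ℕ) (hx : x ≤ 2 * n) :
    OddHoles (configAt (initialConfig n) (movesOf n H) n) x ↔ ∃ y, x = y + 1 ∧ (H n y ∨ G y) := by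
  induction x with
  | zero => simp [not_oddHoles_zero]
  | succ x ih =>
    have hU := (h.validMove n le_rfl).2 x (by omega)
    have h1 := h.cover_odd (j := n) (x := x) ⟨le_rfl, by omega, by omega⟩
    have h2 := h.cover_diag (x := x) (by omega)
    have g1 := h.not_H_U (j := n) (x := x)
    have g2 := h.not_D_U (j := n) (x := x)
    have g3 := h.not_H_D (j := n) (x := x)
    have g4 := h.not_H_G (x := x)
    have g5 := h.not_D_G (x := x)
    have hL : (∃ y, x = y + 1 ∧ (H n y ∨ G y)) → ¬D n x ∧ ¬G x := by
      rintro ⟨y, rfl, hy | hy⟩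
      · exact ⟨h.not_H_D_succ hy, h.not_H_G_succ hy⟩
      · exact ⟨fun hD => h.not_D_succ_G hD hy, h.not_G_G_succ hy⟩
    have e : (∃ y, x + 1 = y + 1 ∧ (H n y ∨ G y)) ↔ H n x ∨ G x := by simp
    rw [e]
    have ih' := ih (by omega)
    by_cases hx' : x ∈ configAt (initialConfig n) (movesOf n H) n
    · rw [oddHoles_succ_of_mem hx', ih']
      generalize (∃ y, x = y + 1 ∧ (H n y ∨ G y)) = L at h2 hL ⊢
      grind
    · rw [oddHoles_succ_of_notMem hx', ih']
      generalize (∃ y, x = y + 1 ∧ (H n y ∨ G y)) = L at h2 hL ⊢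
      grind

theorem StripMatching.eq_hist (h : StripMatching n H D U G) :
    H = histH n (movesOf n H) ∧ D = histD n (movesOf n H) ∧ U = histU n (movesOf n H) ∧
      G = histG n (movesOf n H) := by
  have hs := stripMatching_of_history h.movesOf_mem_histories
  have hU : ∀ j x, U j x ↔ histU n (movesOf n H) j x := by
    intro j x
    rw [histU]
    constructor
    · intro hU
      have hs := h.supp_U hU
      exact ⟨hs.1, hs.2, ((h.validMove j hs.1).2 x hs.2).1 hU⟩
    · rintro ⟨h1, h2, h3⟩
      exact ((h.validMove j h1).2 x h2).2 h3
  have hlt : ∀ j < n, ∀ x, H j x ↔ histH n (movesOf n H) j x := by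
    intro j hj x
    rw [histH]
    constructor
    · exact fun hH => Or.inl ⟨hj, mem_movesOf.2 ⟨(h.supp_H hH).2.1, hj, hH⟩⟩
    · rintro (⟨-, hm⟩ | ⟨hm, -⟩)
      · exact (mem_movesOf.1 hm).2.2
      · omega
  have hodd := h.oddHoles_iff
  have hG : ∀ x, G x ↔ histG n (movesOf n H) x := by
    intro x
    rw [histG]
    constructor
    · intro hG
      have hx := h.supp_G hG
      have hU := (h.validMove n le_rfl).2 x hx
      have h1 := h.cover_odd (j := n) (x := x) ⟨le_rfl, by omega, by omega⟩
      refine ⟨hU.1 ?_, hx, ?_⟩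
      · have := h.not_H_G (x := x)
        have := h.not_D_G (x := x)
        tauto
      · rw [hodd x hx.le]
        rintro ⟨y, rfl, hy | hy⟩
        · exact h.not_H_G_succ hy hG
        · exact h.not_G_G_succ hy hG
    · rintro ⟨h1, h2, h3⟩
      rw [hodd x h2.le] at h3
      have hU := ((h.validMove n le_rfl).2 x h2).2 h1
      rcases h.cover_diag h2.le with h' | h' | h'
      · exact absurd hU (h.not_D_U h')
      · exact h'
      · exact absurd h' h3
  have hH : ∀ j x, H j x ↔ histH n (movesOf n H) j x := by
    intro j x
    rcases lt_trichotomy j n with hj | rfl | hj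
    · exact hlt j hj x
    · constructor
      · intro hH
        have hx := (h.supp_H hH).2.2
        have hU := (h.validMove j le_rfl).2 x hx
        have := h.not_H_U hH
        refine Or.inr ⟨rfl, by tauto, hx, ?_⟩
        rw [hodd x hx.le]
        exact ((h.cover_diag hx.le).resolve_left (h.not_H_D hH)).resolve_left (h.not_H_G hH)
      · rintro (⟨h1, -⟩ | ⟨-, h1, h2, h3⟩)
        · omega
        · have h4 := (hodd _ (by omega)).1 ((oddHoles_succ_of_mem h1).2 h3)
          obtain ⟨y, hy, h'⟩ := h4
          obtain rfl : x = y := by omega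
          refine h'.resolve_right fun hG' => ?_
          exact ((hG x).1 hG').1 h1
    · exact ⟨fun h' => by have := h.supp_H h'; omega, fun h' => by have := hs.supp_H h'; omega⟩
  have hD : ∀ j x, D j x ↔ histD n (movesOf n H) j x := by
    intro j x
    constructor
    · intro hD
      have h1 := hs.cover_odd (h.supp_D hD)
      rw [← hH, ← hU] at h1
      exact (h1.resolve_left fun hh => h.not_H_D hh hD).resolve_right (h.not_D_U hD)
    · intro hD
      have h1 := h.cover_odd (hs.supp_D hD)
      rw [hH, hU] at h1
      exact (h1.resolve_left fun hh => hs.not_H_D hh hD).resolve_right (hs.not_D_U hD)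
  refine ⟨?_, ?_, ?_, ?_⟩
  · ext j x; exact hH j x
  · ext j x; exact hD j x
  · ext j x; exact hU j x
  · ext x; exact hG x

end Strips

section GraphMatchings

/-- Perfect matchings of `Gph n` on `Vset n`, as relations. -/
structure IsMatchingRel (n : ℕ) (R : ℤ × ℤ → ℤ × ℤ → Prop) : Prop where
  symm : ∀ {v w}, R v w → R w v
  adj : ∀ {v w}, R v w → (Gph n).Adj v w
  existsUnique : ∀ v, memV n v → ∃! w, R v w

/-- The matching relation uses the edge to the right of an odd vertex. -/
def edgeH (n : ℕ) (R : ℤ × ℤ → ℤ × ℤ → Prop) (j x : ℕ) : Prop :=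
  R (x, x + 2 * (n - j) + 1) (x + 1, x + 2 * (n - j) + 1)

/-- The matching relation uses the edge below an odd vertex. -/
def edgeD (n : ℕ) (R : ℤ × ℤ → ℤ × ℤ → Prop) (j x : ℕ) : Prop :=
  R (x, x + 2 * (n - j) + 1) (x, x + 2 * (n - j))

/-- The matching relation uses the edge above an odd vertex. -/
def edgeU (n : ℕ) (R : ℤ × ℤ → ℤ × ℤ → Prop) (j x : ℕ) : Prop :=
  R (x, x + 2 * (n - j) + 1) (x, x + 2 * (n - j) + 2)

/-- The matching relation uses a diagonal edge. -/
def edgeG (R : ℤ × ℤ → ℤ × ℤ → Prop) (x : ℕ) : Prop := R (x, x) (x + 1, x + 1)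

/-- The edges described by strip data, oriented. -/
def arcOf (n : ℕ) (H D U : ℕ → ℕ → Prop) (G : ℕ → Prop) (v w : ℤ × ℤ) : Prop :=
  (∃ j x : ℕ, v = ((x : ℤ), (x + 2 * (n - j) + 1 : ℤ)) ∧
    ((H j x ∧ w = ((x + 1 : ℤ), (x + 2 * (n - j) + 1 : ℤ))) ∨
     (D j x ∧ w = ((x : ℤ), (x + 2 * (n - j) : ℤ))) ∨
     (U j x ∧ w = ((x : ℤ), (x + 2 * (n - j) + 2 : ℤ))))) ∨
  ∃ x : ℕ, G x ∧ v = ((x : ℤ), (x : ℤ)) ∧ w = ((x + 1 : ℤ), (x + 1 : ℤ))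

/-- The relation described by strip data. -/
def relOf (n : ℕ) (H D U : ℕ → ℕ → Prop) (G : ℕ → Prop) (v w : ℤ × ℤ) : Prop :=
  arcOf n H D U G v w ∨ arcOf n H D U G w v

theorem memV_of_edgeRel {n : ℕ} {v w : ℤ × ℤ} (h : edgeRel n v w) : memV n v ∧ memV n w := by
  unfold edgeRel at h
  unfold memV
  rcases h with ⟨h1, h2, h3, h4, h5, h6, k, hk⟩ | h | h
  · omega
  · omega
  · omega

theorem memV_of_adj {n : ℕ} {v w : ℤ × ℤ} (h : (Gph n).Adj v w) : memV n v := by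
  rcases h with h | h
  · exact (memV_of_edgeRel h).1
  · exact (memV_of_edgeRel h).2

namespace IsMatchingRel

variable {n : ℕ} {R : ℤ × ℤ → ℤ × ℤ → Prop}

theorem eq_of_rel (hR : IsMatchingRel n R) {v w w' : ℤ × ℤ} (h : R v w) (h' : R v w') : w = w' :=
  (hR.existsUnique v (memV_of_adj (hR.adj h))).unique h h'

theorem odd_neighbour (hR : IsMatchingRel n R) {j x : ℕ} {w : ℤ × ℤ}
    (h : R ((x : ℤ), (x + 2 * (n - j) + 1 : ℤ)) w) :
    (edgeH n R j x ∧ w = ((x + 1 : ℤ), (x + 2 * (n - j) + 1 : ℤ))) ∨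
     (edgeD n R j x ∧ w = ((x : ℤ), (x + 2 * (n - j) : ℤ))) ∨
     (edgeU n R j x ∧ w = ((x : ℤ), (x + 2 * (n - j) + 2 : ℤ))) := by
  obtain ⟨a, b⟩ := w
  have hadj := hR.adj h
  simp only [Gph, edgeRel] at hadj
  unfold edgeH edgeD edgeU
  rcases hadj with (⟨h1, h2, -⟩ | ⟨h1, h2, -⟩ | ⟨h1, -⟩) |
    (⟨h1, h2, -, -, -, -, k, hk⟩ | ⟨h1, h2, -⟩ | ⟨h1, h2, h3, -⟩)
  · subst h1 h2
    exact Or.inl ⟨h, rfl⟩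
  · obtain rfl : b = x + 2 * (n - j) + 2 := by omega
    subst h1
    exact Or.inr (Or.inr ⟨h, rfl⟩)
  · omega
  · omega
  · obtain rfl : b = x + 2 * (n - j) := by omega
    subst h1
    exact Or.inr (Or.inl ⟨h, rfl⟩)
  · omega

theorem even_neighbour (hR : IsMatchingRel n R) {j x : ℕ} {w : ℤ × ℤ}
    (h : R ((x : ℤ), (x + 2 * (n - j) : ℤ)) w) :
    (∃ y, x = y + 1 ∧ edgeH n R j y) ∨ edgeD n R j x ∨ edgeU n R (j + 1) x ∨
      (j = n ∧ (edgeG R x ∨ ∃ y, x = y + 1 ∧ edgeG R y)) := by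
  obtain ⟨a, b⟩ := w
  have hadj := hR.adj h
  have h' := hR.symm h
  simp only [Gph, edgeRel] at hadj
  unfold edgeH edgeD edgeU edgeG
  rcases hadj with (⟨h1, h2, -, -, -, -, k, hk⟩ | ⟨h1, h2, -⟩ | ⟨h1, h2, h3, -⟩) |
    (⟨h1, h2, h3, -⟩ | ⟨h1, h2, -⟩ | ⟨h1, h2, h3, h4, -⟩)
  · omega
  · subst h1 h2
    exact Or.inr (Or.inl h')
  · obtain rfl : j = n := by omega
    refine Or.inr (Or.inr (Or.inr ⟨rfl, Or.inl ?_⟩))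
    convert h using 2 <;> omega
  · obtain ⟨y, rfl⟩ : ∃ y : ℕ, a = y := ⟨a.toNat, by omega⟩
    refine Or.inl ⟨y, by omega, ?_⟩
    convert h' using 2 <;> omega
  · refine Or.inr (Or.inr (Or.inl ?_))
    convert h' using 2 <;> push_cast <;> omega
  · obtain ⟨y, rfl⟩ : ∃ y : ℕ, a = y := ⟨a.toNat, by omega⟩
    refine Or.inr (Or.inr (Or.inr ⟨by omega, Or.inr ⟨y, by omega, ?_⟩⟩))
    convert h' using 2 <;> omega

theorem stripMatching (hR : IsMatchingRel n R) :
    StripMatching n (edgeH n R) (edgeD n R) (edgeU n R) (edgeG R) := by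
  have hadj : ∀ v w, R v w → edgeRel n v w ∨ edgeRel n w v := fun v w h => hR.adj h
  have uniq : ∀ v w w', R v w → R v w' → w = w' := fun v w w' => hR.eq_of_rel
  have uniq' : ∀ v v' w, R v w → R v' w → v = v' := fun v v' w h h' =>
    hR.eq_of_rel (hR.symm h) (hR.symm h')
  constructor
  · intro j x h
    rcases hadj _ _ h with h | h <;> simp only [edgeRel] at h <;> omega
  · intro j x h
    unfold IsOddVertex
    rcases hadj _ _ h with h | h <;> simp only [edgeRel] at h <;> omega
  · intro j x h
    rcases hadj _ _ h with h | h <;> simp only [edgeRel] at h <;> omega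
  · intro x h
    rcases hadj _ _ h with h | h <;> simp only [edgeRel] at h <;> omega
  · rintro j x ⟨h1, h2, h3⟩
    obtain ⟨w, hw, -⟩ := hR.existsUnique ((x : ℤ), (x + 2 * (n - j) + 1 : ℤ))
      (by simp only [memV]; omega)
    have := hR.odd_neighbour hw
    tauto
  · intro j x h h'
    have := congrArg Prod.fst (uniq _ _ _ h h')
    simp only at this
    omega
  · intro j x h h'
    have := congrArg Prod.fst (uniq _ _ _ h h')
    simp only at this
    omega
  · intro j x h h'
    have := congrArg Prod.snd (uniq _ _ _ h h')
    simp only at this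
    omega
  · intro j x h1 h2
    obtain ⟨w, hw, -⟩ := hR.existsUnique ((x : ℤ), (x + 2 * (n - j) : ℤ))
      (by simp only [memV]; omega)
    rcases hR.even_neighbour hw with h | h | h | ⟨h, -⟩
    · exact Or.inl h
    · exact Or.inr (Or.inl h)
    · exact Or.inr (Or.inr h)
    · omega
  · intro j x h h'
    unfold edgeH at h
    unfold edgeD at h'
    have e : (((x + 1 : ℕ) : ℤ), ((x + 1 : ℕ) + 2 * (n - j) : ℤ)) =
      ((x + 1 : ℤ), (x + 2 * (n - j) + 1 : ℤ)) := by ext <;> push_cast <;> ring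
    rw [e] at h'
    have := congrArg Prod.fst (uniq' _ _ _ h h')
    simp only at this
    omega
  · intro j x h h'
    unfold edgeH at h
    unfold edgeU at h'
    have e : (((x + 1 : ℕ) : ℤ), ((x + 1 : ℕ) + 2 * (n - (j + 1 : ℕ)) + 2 : ℤ)) =
      ((x + 1 : ℤ), (x + 2 * (n - j) + 1 : ℤ)) := by ext <;> push_cast <;> ring
    rw [e] at h'
    have := congrArg Prod.fst (uniq' _ _ _ h h')
    simp only at this
    omega
  · intro j x h h'
    unfold edgeD at h
    unfold edgeU at h'
    have e : ((x : ℤ), (x + 2 * (n - (j + 1 : ℕ)) + 2 : ℤ)) =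
      ((x : ℤ), (x + 2 * (n - j) : ℤ)) := by ext <;> push_cast <;> ring
    rw [e] at h'
    have := congrArg Prod.snd (uniq' _ _ _ h h')
    simp only at this
    omega
  · intro x hx
    obtain ⟨w, hw, -⟩ := hR.existsUnique ((x : ℤ), (x + 2 * (n - n) : ℤ))
      (by simp only [memV]; omega)
    rcases hR.even_neighbour hw with ⟨y, hy, h⟩ | h | h | ⟨-, h | ⟨y, hy, h⟩⟩
    · exact Or.inr (Or.inr ⟨y, hy, Or.inl h⟩)
    · exact Or.inl h
    · rcases hadj _ _ h with h | h <;> simp only [edgeRel] at h <;> omega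
    · exact Or.inr (Or.inl h)
    · exact Or.inr (Or.inr ⟨y, hy, Or.inr h⟩)
  · intro x h h'
    unfold edgeH at h
    unfold edgeG at h'
    have e : ((x + 1 : ℤ), (x + 2 * (n - n) + 1 : ℤ)) = ((x + 1 : ℤ), (x + 1 : ℤ)) := by
      ext <;> simp
    rw [e] at h
    have := congrArg Prod.snd (uniq' _ _ _ h h')
    simp only at this
    omega
  · intro x h h'
    unfold edgeH at h
    unfold edgeG at h'
    have e : ((x + 1 : ℤ), (x + 2 * (n - n) + 1 : ℤ)) =
      (((x + 1 : ℕ) : ℤ), ((x + 1 : ℕ) : ℤ)) := by ext <;> simp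
    rw [e] at h
    have := congrArg Prod.fst (uniq _ _ _ (hR.symm h) h')
    simp only at this
    omega
  · intro x h h'
    unfold edgeD at h
    unfold edgeG at h'
    have e : ((x : ℤ), (x + 2 * (n - n) : ℤ)) = ((x : ℤ), (x : ℤ)) := by ext <;> simp
    rw [e] at h
    have := congrArg Prod.fst (uniq _ _ _ (hR.symm h) h')
    simp only at this
    omega
  · intro x h h'
    unfold edgeD at h
    unfold edgeG at h'
    have e : (((x + 1 : ℕ) : ℤ), ((x + 1 : ℕ) + 2 * (n - n) : ℤ)) =
      ((x + 1 : ℤ), (x + 1 : ℤ)) := by ext <;> simp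
    rw [e] at h
    have := congrArg Prod.fst (uniq' _ _ _ h h')
    simp only at this
    omega
  · intro x h h'
    unfold edgeG at h h'
    have e : (((x + 1 : ℕ) : ℤ), ((x + 1 : ℕ) : ℤ)) = ((x + 1 : ℤ), (x + 1 : ℤ)) := by
      ext <;> simp
    rw [e] at h'
    have := congrArg Prod.fst (uniq _ _ _ (hR.symm h) h')
    simp only at this
    omega

theorem eq_relOf (hR : IsMatchingRel n R) :
    R = relOf n (edgeH n R) (edgeD n R) (edgeU n R) (edgeG R) := by
  have harc : ∀ v w, arcOf n (edgeH n R) (edgeD n R) (edgeU n R) (edgeG R) v w → R v w := by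
    rintro v w (⟨j, x, rfl, ⟨h, rfl⟩ | ⟨h, rfl⟩ | ⟨h, rfl⟩⟩ | ⟨x, h, rfl, rfl⟩) <;> exact h
  have hodd : ∀ (a b : ℤ) w, (a + b) % 2 = 1 → R (a, b) w →
      arcOf n (edgeH n R) (edgeD n R) (edgeU n R) (edgeG R) (a, b) w := by
    intro a b w hab h
    have hm := memV_of_adj (hR.adj h)
    simp only [memV] at hm
    obtain ⟨x, rfl⟩ : ∃ x : ℕ, a = x := ⟨a.toNat, by omega⟩
    obtain ⟨j, rfl⟩ : ∃ j : ℕ, b = x + 2 * (n - j) + 1 := ⟨n - ((b - x - 1) / 2).toNat, by omega⟩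
    exact Or.inl ⟨j, x, rfl, hR.odd_neighbour h⟩
  ext ⟨a, b⟩ ⟨c, d⟩
  constructor
  · intro h
    rcases hR.adj h with h' | h'
    · simp only [edgeRel] at h'
      rcases h' with ⟨h1, h2, h3, h4, h5, h6, k, hk⟩ | ⟨h1, h2, h3⟩ | ⟨h1, h2, h3, h4, h5⟩
      · exact Or.inl (hodd _ _ _ (by omega) h)
      · rcases Int.emod_two_eq_zero_or_one (a + b) with hp | hp
        · exact Or.inr (hodd _ _ _ (by omega) (hR.symm h))
        · exact Or.inl (hodd _ _ _ hp h)
      · obtain ⟨x, rfl⟩ : ∃ x : ℕ, a = x := ⟨a.toNat, by omega⟩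
        subst h1 h2 h3
        exact Or.inl (Or.inr ⟨x, h, rfl, rfl⟩)
    · simp only [edgeRel] at h'
      rcases h' with ⟨h1, h2, h3, h4, h5, h6, k, hk⟩ | ⟨h1, h2, h3⟩ | ⟨h1, h2, h3, h4, h5⟩
      · exact Or.inr (hodd _ _ _ (by omega) (hR.symm h))
      · rcases Int.emod_two_eq_zero_or_one (a + b) with hp | hp
        · exact Or.inr (hodd _ _ _ (by omega) (hR.symm h))
        · exact Or.inl (hodd _ _ _ hp h)
      · obtain ⟨x, rfl⟩ : ∃ x : ℕ, c = x := ⟨c.toNat, by omega⟩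
        subst h1 h2 h3
        exact Or.inr (Or.inr ⟨x, hR.symm h, rfl, rfl⟩)
  · rintro (h | h)
    · exact harc _ _ h
    · exact hR.symm (harc _ _ h)

end IsMatchingRel

end GraphMatchings

section GraphMatchings

variable {n : ℕ} {H D U : ℕ → ℕ → Prop} {G : ℕ → Prop}

theorem relOf_odd_neighbour {j x : ℕ} {w : ℤ × ℤ}
    (h : relOf n H D U G ((x : ℤ), (x + 2 * (n - j) + 1 : ℤ)) w) :
    (H j x ∧ w = ((x + 1 : ℤ), (x + 2 * (n - j) + 1 : ℤ))) ∨
     (D j x ∧ w = ((x : ℤ), (x + 2 * (n - j) : ℤ))) ∨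
     (U j x ∧ w = ((x : ℤ), (x + 2 * (n - j) + 2 : ℤ))) := by
  rcases h with (⟨k, y, e, h⟩ | ⟨y, h, e, rfl⟩) |
    (⟨k, y, rfl, ⟨h, e⟩ | ⟨h, e⟩ | ⟨h, e⟩⟩ | ⟨y, h, rfl, e⟩) <;> rw [Prod.mk.injEq] at e
  · obtain rfl : x = y := by omega
    obtain rfl : j = k := by omega
    exact h
  all_goals omega

theorem relOf_even_neighbour {j x : ℕ} {w : ℤ × ℤ}
    (h : relOf n H D U G ((x : ℤ), (x + 2 * (n - j) : ℤ)) w) :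
    (∃ y : ℕ, x = y + 1 ∧ H j y ∧ w = ((y : ℤ), (y + 2 * (n - j) + 1 : ℤ))) ∨
      (D j x ∧ w = ((x : ℤ), (x + 2 * (n - j) + 1 : ℤ))) ∨
      (U (j + 1) x ∧ w = ((x : ℤ), (x + 2 * (n - j) - 1 : ℤ))) ∨
      (j = n ∧ G x ∧ w = ((x + 1 : ℤ), (x + 1 : ℤ))) ∨
      (j = n ∧ ∃ y : ℕ, x = y + 1 ∧ G y ∧ w = ((y : ℤ), (y : ℤ))) := by
  rcases h with (⟨k, y, e, h⟩ | ⟨y, h, e, rfl⟩) |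
    (⟨k, y, rfl, ⟨h, e⟩ | ⟨h, e⟩ | ⟨h, e⟩⟩ | ⟨y, h, rfl, e⟩) <;> rw [Prod.mk.injEq] at e
  · omega
  · obtain rfl : x = y := by omega
    exact Or.inr (Or.inr (Or.inr (Or.inl ⟨by omega, h, rfl⟩)))
  · obtain rfl : j = k := by omega
    exact Or.inl ⟨y, by omega, h, rfl⟩
  · obtain rfl : x = y := by omega
    obtain rfl : j = k := by omega
    exact Or.inr (Or.inl ⟨h, rfl⟩)
  · obtain rfl : x = y := by omega
    obtain rfl : k = j + 1 := by omega
    refine Or.inr (Or.inr (Or.inl ⟨h, ?_⟩))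
    ext
    · rfl
    · push_cast
      ring
  · exact Or.inr (Or.inr (Or.inr (Or.inr ⟨by omega, y, by omega, h, rfl⟩)))

theorem edgeH_relOf : edgeH n (relOf n H D U G) = H := by
  ext j x
  constructor
  · intro h
    rcases relOf_odd_neighbour h with ⟨h, -⟩ | ⟨-, e⟩ | ⟨-, e⟩
    · exact h
    all_goals
      rw [Prod.mk.injEq] at e
      omega
  · exact fun h => Or.inl (Or.inl ⟨j, x, rfl, Or.inl ⟨h, rfl⟩⟩)

namespace StripMatching

theorem adj_of_arcOf (hS : StripMatching n H D U G) {v w : ℤ × ℤ}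
    (h : arcOf n H D U G v w) : (Gph n).Adj v w := by
  change edgeRel n v w ∨ edgeRel n w v
  rcases h with ⟨j, x, rfl, ⟨h, rfl⟩ | ⟨h, rfl⟩ | ⟨h, rfl⟩⟩ | ⟨x, h, rfl, rfl⟩
  · have := hS.supp_H h
    exact Or.inl (Or.inl ⟨rfl, rfl, by simp only; omega, by simp only; omega, by simp only; omega,
      by simp only; omega, x + (n - j), by ring⟩)
  · have := hS.supp_D h
    unfold IsOddVertex at this
    refine Or.inr (Or.inr (Or.inl ⟨?_, ?_, ?_, ?_, ?_, ?_⟩)) <;> simp only <;> omega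
  · have := hS.supp_U h
    refine Or.inl (Or.inr (Or.inl ⟨?_, ?_, ?_, ?_, ?_, ?_⟩)) <;> simp only <;> omega
  · have := hS.supp_G h
    refine Or.inl (Or.inr (Or.inr ⟨?_, ?_, ?_, ?_, ?_⟩)) <;> simp only <;> omega

theorem relOf_odd_unique (hS : StripMatching n H D U G) {j x : ℕ} {w w' : ℤ × ℤ}
    (h : relOf n H D U G ((x : ℤ), (x + 2 * (n - j) + 1 : ℤ)) w)
    (h' : relOf n H D U G ((x : ℤ), (x + 2 * (n - j) + 1 : ℤ)) w') : w = w' := by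
  have h1 := @hS.not_H_D j x
  have h2 := @hS.not_H_U j x
  have h3 := @hS.not_D_U j x
  rcases relOf_odd_neighbour h with ⟨h, rfl⟩ | ⟨h, rfl⟩ | ⟨h, rfl⟩ <;>
    rcases relOf_odd_neighbour h' with ⟨h', rfl⟩ | ⟨h', rfl⟩ | ⟨h', rfl⟩ <;>
    first | rfl | (exfalso; tauto)

theorem relOf_even_unique (hS : StripMatching n H D U G) {j x : ℕ} {w w' : ℤ × ℤ}
    (h : relOf n H D U G ((x : ℤ), (x + 2 * (n - j) : ℤ)) w)
    (h' : relOf n H D U G ((x : ℤ), (x + 2 * (n - j) : ℤ)) w') : w = w' := by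
  have hU : ∀ {x}, ¬U (n + 1) x := fun h => by
    have := hS.supp_U h
    omega
  have h1 := @hS.not_H_D_succ
  have h2 := @hS.not_H_U_succ
  have h3 := @hS.not_D_U_succ
  have h4 := @hS.not_H_G
  have h5 := @hS.not_H_G_succ
  have h6 := @hS.not_D_G
  have h7 := @hS.not_D_succ_G
  have h8 := @hS.not_G_G_succ
  rcases relOf_even_neighbour h with ⟨y, hy, h, rfl⟩ | ⟨h, rfl⟩ | ⟨h, rfl⟩ | ⟨hj, h, rfl⟩ |
      ⟨hj, y, hy, h, rfl⟩ <;>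
    rcases relOf_even_neighbour h' with ⟨z, hz, h', rfl⟩ | ⟨h', rfl⟩ | ⟨h', rfl⟩ |
      ⟨hj', h', rfl⟩ | ⟨hj', z, hz, h', rfl⟩ <;> grind

theorem isMatchingRel_relOf (hS : StripMatching n H D U G) :
    IsMatchingRel n (relOf n H D U G) where
  symm := Or.symm
  adj h := by
    rcases h with h | h
    · exact hS.adj_of_arcOf h
    · exact (hS.adj_of_arcOf h).symm
  existsUnique := by
    rintro ⟨a, b⟩ hm
    simp only [memV] at hm
    obtain ⟨x, rfl⟩ : ∃ x : ℕ, a = x := ⟨a.toNat, by omega⟩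
    rcases Int.emod_two_eq_zero_or_one (x + b) with hp | hp
    · obtain ⟨j, hj, rfl⟩ : ∃ j : ℕ, j ≤ n ∧ b = x + 2 * (n - j) :=
        ⟨n - ((b - x) / 2).toNat, by omega, by omega⟩
      refine existsUnique_of_exists_of_unique ?_ fun w w' h h' => hS.relOf_even_unique h h'
      rcases hj.lt_or_eq with hj | rfl
      · rcases hS.cover_even (x := x) hj (by omega) with ⟨y, rfl, h⟩ | h | h
        · exact ⟨_, Or.inr (Or.inl ⟨j, y, rfl, Or.inl ⟨h, by ext <;> push_cast <;> ring⟩⟩)⟩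
        · exact ⟨_, Or.inr (Or.inl ⟨j, x, rfl, Or.inr (Or.inl ⟨h, rfl⟩)⟩)⟩
        · exact ⟨_, Or.inr (Or.inl ⟨j + 1, x, rfl,
            Or.inr (Or.inr ⟨h, by ext <;> push_cast <;> ring⟩)⟩)⟩
      · rcases hS.cover_diag (x := x) (by omega) with h | h | ⟨y, rfl, h | h⟩
        · exact ⟨_, Or.inr (Or.inl ⟨j, x, rfl, Or.inr (Or.inl ⟨h, rfl⟩)⟩)⟩
        · exact ⟨_, Or.inl (Or.inr ⟨x, h, by ext <;> simp, rfl⟩)⟩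
        · exact ⟨_, Or.inr (Or.inl ⟨j, y, rfl, Or.inl ⟨h, by ext <;> push_cast <;> ring⟩⟩)⟩
        · exact ⟨_, Or.inr (Or.inr ⟨y, h, rfl, by ext <;> simp⟩)⟩
    · obtain ⟨j, hj, rfl⟩ : ∃ j : ℕ, j ≤ n ∧ b = x + 2 * (n - j) + 1 :=
        ⟨n - ((b - x - 1) / 2).toNat, by omega, by omega⟩
      refine existsUnique_of_exists_of_unique ?_ fun w w' h h' => hS.relOf_odd_unique h h'
      rcases hS.cover_odd (j := j) (x := x) (by unfold IsOddVertex; omega) with h | h | h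
      · exact ⟨_, Or.inl (Or.inl ⟨j, x, rfl, Or.inl ⟨h, rfl⟩⟩)⟩
      · exact ⟨_, Or.inl (Or.inl ⟨j, x, rfl, Or.inr (Or.inl ⟨h, rfl⟩)⟩)⟩
      · exact ⟨_, Or.inl (Or.inl ⟨j, x, rfl, Or.inr (Or.inr ⟨h, rfl⟩)⟩)⟩

end StripMatching

/-- The relation on `ℤ × ℤ` underlying a subgraph of an induced subgraph. -/
def subgraphRel {s : Set (ℤ × ℤ)} {K : SimpleGraph (ℤ × ℤ)} (M : (K.induce s).Subgraph)
    (v w : ℤ × ℤ) : Prop :=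
  ∃ (hv : v ∈ s) (hw : w ∈ s), M.Adj ⟨v, hv⟩ ⟨w, hw⟩

theorem isMatchingRel_subgraphRel {M : ((Gph n).induce (Vset n \ ∅)).Subgraph}
    (hM : M.IsPerfectMatching) : IsMatchingRel n (subgraphRel M) where
  symm := fun ⟨hv, hw, h⟩ => ⟨hw, hv, h.symm⟩
  adj := fun ⟨_, _, h⟩ => M.adj_sub h
  existsUnique := by
    intro v hv
    have hv' : v ∈ Vset n \ ∅ := ⟨hv, fun h => h⟩
    obtain ⟨w, hw, hu⟩ := SimpleGraph.Subgraph.isPerfectMatching_iff.1 hM ⟨v, hv'⟩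
    refine ⟨w, ⟨hv', w.2, hw⟩, ?_⟩
    rintro y ⟨_, hy, h⟩
    exact congrArg Subtype.val (hu ⟨y, hy⟩ h)

/-- The subgraph given by a matching relation. -/
def IsMatchingRel.toSubgraph {R : ℤ × ℤ → ℤ × ℤ → Prop} (hR : IsMatchingRel n R) :
    ((Gph n).induce (Vset n \ ∅)).Subgraph where
  verts := Set.univ
  Adj v w := R v w
  adj_sub h := hR.adj h
  edge_vert _ := Set.mem_univ _
  symm := ⟨fun _ _ h => hR.symm h⟩

theorem IsMatchingRel.isPerfectMatching_toSubgraph {R : ℤ × ℤ → ℤ × ℤ → Prop}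
    (hR : IsMatchingRel n R) : hR.toSubgraph.IsPerfectMatching := by
  rw [SimpleGraph.Subgraph.isPerfectMatching_iff]
  rintro ⟨v, hv⟩
  obtain ⟨w, hw, hu⟩ := hR.existsUnique v hv.1
  exact ⟨⟨w, memV_of_adj (hR.adj (hR.symm hw)), fun h => h⟩, hw,
    fun y hy => Subtype.ext (hu y hy)⟩

theorem IsMatchingRel.subgraphRel_toSubgraph {R : ℤ × ℤ → ℤ × ℤ → Prop}
    (hR : IsMatchingRel n R) : subgraphRel hR.toSubgraph = R := by
  ext v w
  exact ⟨fun ⟨_, _, h⟩ => h, fun h => ⟨⟨memV_of_adj (hR.adj h), fun h => h⟩,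
    ⟨memV_of_adj (hR.adj (hR.symm h)), fun h => h⟩, h⟩⟩

theorem subgraph_ext_of_subgraphRel {s : Set (ℤ × ℤ)} {K : SimpleGraph (ℤ × ℤ)}
    {M N : (K.induce s).Subgraph} (hM : M.IsSpanning) (hN : N.IsSpanning)
    (h : subgraphRel M = subgraphRel N) : M = N := by
  refine SimpleGraph.Subgraph.ext ?_ ?_
  · rw [hM.verts_eq_univ, hN.verts_eq_univ]
  · ext ⟨v, hv⟩ ⟨w, hw⟩
    have := congrFun (congrFun h v) w
    simpa [subgraphRel, hv, hw] using this

theorem IsMatchingRel.eq_relOf_movesOf {R : ℤ × ℤ → ℤ × ℤ → Prop} (hR : IsMatchingRel n R) :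
    R = relOf n (histH n (movesOf n (edgeH n R))) (histD n (movesOf n (edgeH n R)))
      (histU n (movesOf n (edgeH n R))) (histG n (movesOf n (edgeH n R))) := by
  obtain ⟨h1, h2, h3, h4⟩ := hR.stripMatching.eq_hist
  rw [← h1, ← h2, ← h3, ← h4]
  exact hR.eq_relOf

/-- Perfect matchings of the graph are the same as histories of particle moves. -/
theorem Zpm_empty_eq_card_histories (n : ℕ) :
    Zpm n ∅ = Nat.card (histories n 0 (initialConfig n)) := by
  refine Nat.card_congr (Equiv.ofBijective (fun M => ⟨movesOf n (edgeH n (subgraphRel M.1)),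
    (isMatchingRel_subgraphRel M.2).stripMatching.movesOf_mem_histories⟩) ⟨?_, ?_⟩)
  · rintro ⟨M, hM⟩ ⟨N, hN⟩ h
    have h : movesOf n (edgeH n (subgraphRel M)) = movesOf n (edgeH n (subgraphRel N)) :=
      congrArg Subtype.val h
    refine Subtype.ext (subgraph_ext_of_subgraphRel hM.2 hN.2 ?_)
    rw [(isMatchingRel_subgraphRel hM).eq_relOf_movesOf,
      (isMatchingRel_subgraphRel hN).eq_relOf_movesOf, h]
  · rintro ⟨e, he⟩
    have hR := (stripMatching_of_history he).isMatchingRel_relOf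
    refine ⟨⟨hR.toSubgraph, hR.isPerfectMatching_toSubgraph⟩, Subtype.ext ?_⟩
    simp only [hR.subgraphRel_toSubgraph, edgeH_relOf]
    exact movesOf_histH he

end GraphMatchings

/-- For every `n ≥ 0`, the number of perfect matchings of `G_n` equals
`A_{n+1} = Π_{i=0}^{n} (3i+1)!/((n+1)+i)!`, the number of `(n+1)×(n+1)` alternating
sign matrices. -/
theorem Zpm_eq_ASM (n : ℕ) :
    (Zpm n ∅ : ℚ) =
      ∏ i ∈ Finset.range (n+1),
        (Nat.factorial (3*i+1) : ℚ) / (Nat.factorial ((n+1)+i) : ℚ) := by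
  rw [Zpm_empty_eq_card_histories]
  exact card_histories_eq n
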